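/- arXiv:2410.00235 — 7 statements merged into one kernel-verified Lean document; each statement's English description precedes it below -/
import Mathlib

section
/- Let W be a d-dimensional complex vector space with a skew-symmetric bilinear form of rank 2r (possibly degenerate). For 0 ≤ k ≤ d−r, the variety of k-dimensional isotropic subspaces of W is an irreducible projective variety of dimension k(d−k) − k(k−1)/2 + (k−r)(k−r−1)/2, where the last term is zero when k ≤ r. -/
open Module Submodule LinearMap

noncomputable section

variable {V : Type*} [AddCommGroup V] [Module ℂ V]

/-- Perpendicular of a subspace with respect to a bilinear form. -/
def perp (B : V →ₗ[ℂ] V →ₗ[ℂ] ℂ) (W : Submodule ℂ V) : Submodule ℂ V where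
  carrier := {v | ∀ w ∈ W, B v w = 0}
  add_mem' := by
    intro a b ha hb w hw
    simp [map_add, ha w hw, hb w hw]
  zero_mem' := by intro w hw; simp
  smul_mem' := by
    intro c a ha w hw
    simp [map_smul, ha w hw]

@[simp] lemma mem_perp {B : V →ₗ[ℂ] V →ₗ[ℂ] ℂ} {W : Submodule ℂ V} {v : V} :
    v ∈ perp B W ↔ ∀ w ∈ W, B v w = 0 := Iff.rfl

/-- The subquotient W/U for U ≤ W. -/
abbrev SubQuot (W U : Submodule ℂ V) : Type _ := W ⧸ (U.comap W.subtype)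

/-- The endomorphism induced on the subquotient W/U by x. -/
def subQuotMap (x : V →ₗ[ℂ] V) (W U : Submodule ℂ V)
    (hW : ∀ v ∈ W, x v ∈ W) (hU : ∀ v ∈ U, x v ∈ U) :
    SubQuot W U →ₗ[ℂ] SubQuot W U :=
  Submodule.mapQ _ _ (x.restrict hW) (by
    intro a ha
    simp only [Submodule.mem_comap, LinearMap.restrict_apply, Submodule.coe_subtype] at ha ⊢
    exact hU a.1 ha)

/-- The Zariski topology on a complex vector space. -/
def zariski (M : Type*) [AddCommGroup M] [Module ℂ M] : TopologicalSpace M :=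
  TopologicalSpace.generateFrom
    {U | ∃ f : M → ℂ,
      f ∈ Algebra.adjoin ℂ {g : M → ℂ | ∃ φ : M →ₗ[ℂ] ℂ, g = ⇑φ} ∧ U = {x | f x ≠ 0}}

/-- The Grassmannian of k-dimensional subspaces of M. -/
def Grass (M : Type*) [AddCommGroup M] [Module ℂ M] (k : ℕ) : Type _ :=
  {F : Submodule ℂ M // finrank ℂ F = k}

/-- The Zariski topology on the Grassmannian, coinduced from the space of
linearly independent k-tuples with its Zariski topology. -/
instance grassTopology (M : Type*) [AddCommGroup M] [Module ℂ M] (k : ℕ) :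
    TopologicalSpace (Grass M k) :=
  TopologicalSpace.coinduced
    (fun v : {v : Fin k → M // LinearIndependent ℂ v} =>
      (⟨Submodule.span ℂ (Set.range v.1),
        (finrank_span_eq_card v.2).trans (by simp)⟩ : Grass M k))
    (TopologicalSpace.induced Subtype.val (zariski (Fin k → M)))

end

/-!
A subspace `M` with `M = M^⊥` has dimension `d - r`, and every isotropic subspace lies in such an
`M`. Given two of these, a product of `d` symplectic transvections `v ↦ v + B(v, a) a` carries one
to the other, since as long as they differ a suitable transvection enlarges their intersection.
Hence every isotropic `k`-dimensional subspace is the image, under `d` transvections, of a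
subspace of one fixed `M`, and the isotropic Grassmannian is the continuous image of an open subset
of a vector space: it is irreducible.

For the dimension, put the form in normal form with `m = min(k, r)` hyperbolic planes split off and
`s = k - m` vectors taken from the radical. In the resulting chart of the Grassmannian an isotropic
subspace is the row space of a matrix `(1 | Y | T)`; the block `T` is arbitrary, the isotropy
equations express the antisymmetric part of the square part of `Y` and all of its remaining rows
through `T`, and the symmetric part of the square part is free. This open cell is thus homeomorphic
to a vector space `P`. By irreducibility the cell is dense, so the coordinates in any other chart
are rational functions on `P`, with a common denominator, on a dense subset of that chart. Its
regular functions therefore embed into a localization of the polynomial ring of `P`, and their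
transcendence degree, which bounds the Krull dimension, is at most `dim P`.
-/

open TopologicalSpace Topology

/-! ### Krull dimension and algebras of functions -/

section TopologicalKrullDim

variable {X : Type*} [TopologicalSpace X]

lemma topologicalKrullDim_le_of_forall_exists_isOpen {n : WithBot ℕ∞}
    (h : ∀ x : X, ∃ U : Set X, IsOpen U ∧ x ∈ U ∧ topologicalKrullDim U ≤ n) :
    topologicalKrullDim X ≤ n := by
  refine iSup_le fun l => ?_
  obtain ⟨x, hx⟩ := l.head.isIrreducible.nonempty
  obtain ⟨U, hU, hxU, hdim⟩ := h x
  have hxl (i) : x ∈ (l i : Set X) := (l.monotone (Fin.zero_le i) : l 0 ≤ l i) hx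
  let trace (i) : IrreducibleCloseds U :=
    { carrier := Subtype.val ⁻¹' (l i : Set X)
      isIrreducible' := ⟨⟨⟨x, hxU⟩, hxl i⟩,
        (l i).isIrreducible.isPreirreducible.preimage hU.isOpenEmbedding_subtypeVal⟩
      isClosed' := (l i).isClosed.preimage continuous_subtype_val }
  have closure_inter (i) : closure ((l i : Set X) ∩ U) = l i :=
    (closure_minimal Set.inter_subset_left (l i).isClosed).antisymm
      (subset_closure_inter_of_isPreirreducible_of_isOpen (l i).isIrreducible.isPreirreducible hU
        ⟨x, hxl i, hxU⟩)
  have trace_lt {i j} (hij : l i < l j) : trace i < trace j := by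
    refine lt_of_le_not_ge (fun y hy => hij.le hy) fun hji => hij.not_ge ?_
    refine SetLike.coe_subset_coe.1 ?_
    rw [← closure_inter i, ← closure_inter j]
    exact closure_mono fun y hy => ⟨hji (x := ⟨y, hy.2⟩) hy.1, hy.2⟩
  exact (Order.le_krullDim_iff.2 ⟨⟨l.length, trace, fun i => trace_lt (l.step i)⟩, rfl⟩).trans hdim

end TopologicalKrullDim

section KrullDimension

variable {K : Type*} [Field K]

lemma ringKrullDim_le_of_trdeg_le {A : Type*} [CommRing A] [Algebra K A] [Algebra.FiniteType K A]
    {n : ℕ} (h : Algebra.trdeg K A ≤ n) : ringKrullDim A ≤ n := by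
  nontriviality A using ringKrullDim_eq_bot_of_subsingleton
  obtain ⟨s, g, g_inj, g_int⟩ := exists_integral_inj_algHom_of_fg K A
  have s_le : s ≤ n := by
    have := (lift_trdeg_le_of_injective g g_inj).trans (Cardinal.lift_le.2 h)
    simpa using this
  algebraize [g.toRingHom]
  have : Algebra.IsIntegral (MvPolynomial (Fin s) K) A := ⟨g_int⟩
  calc ringKrullDim A ≤ ringKrullDim (MvPolynomial (Fin s) K) :=
        Order.krullDim_le_of_strictMono
          (PrimeSpectrum.comap (algebraMap (MvPolynomial (Fin s) K) A)) fun _ _ hIJ =>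
          Ideal.IsIntegral.comap_lt_comap hIJ
    _ = s := by simp [MvPolynomial.ringKrullDim_of_isNoetherianRing]
    _ ≤ n := by exact_mod_cast s_le

lemma trdeg_localization (K : Type*) [Field K] {R : Type*} [CommRing R] [IsDomain R] [Algebra K R]
    {S : Submonoid R} (hS : S ≤ nonZeroDivisors R) :
    Algebra.trdeg K (Localization S) = Algebra.trdeg K R := by
  have := IsLocalization.isDomain_localization hS
  have := IsLocalization.isAlgebraic (Localization S) S
  have := (faithfulSMul_iff_algebraMap_injective R (Localization S)).2
    (IsLocalization.injective _ hS)
  rw [← trdeg_add_eq K R (A := Localization S), trdeg_eq_zero (R := R), add_zero]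

universe u v

lemma lift_trdeg_le_of_forall_mul_pow_mem_range {R : Type u} {A : Type v} {E : Type*} [CommRing R]
    [IsDomain R] [CommRing A] [CommRing E] [Algebra K R] [Algebra K A] [Algebra K E]
    {i : R →ₐ[K] E} (hi : Function.Injective i) {δ : R} (hδ : IsUnit (i δ))
    {ρ : A →ₐ[K] E} (hρ : Function.Injective ρ) (h : ∀ a, ∃ n : ℕ, ρ a * i δ ^ n ∈ i.range) :
    Cardinal.lift.{u} (Algebra.trdeg K A) ≤ Cardinal.lift.{v} (Algebra.trdeg K R) := by
  have := hi.nontrivial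
  have hS : Submonoid.powers δ ≤ nonZeroDivisors R := by
    refine powers_le_nonZeroDivisors_of_noZeroDivisors ?_
    rintro rfl
    simp at hδ
  let l : Localization.Away δ →ₐ[K] E := IsLocalization.Away.liftAlgHom δ hδ
  have l_inj : Function.Injective l := by
    refine (IsLocalization.lift_injective_iff _).2 fun x y => ?_
    rw [(IsLocalization.injective _ hS).eq_iff]
    exact hi.eq_iff.symm
  have hρl (a : A) : ρ a ∈ l.range := by
    obtain ⟨n, r, hr⟩ := h a
    refine ⟨IsLocalization.mk' _ r (⟨δ ^ n, n, rfl⟩ : Submonoid.powers δ),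
      (IsLocalization.lift_mk'_spec _ _ _ _).2 ?_⟩
    exact hr.trans (by simp [mul_comm])
  let e := AlgEquiv.ofInjective l l_inj
  let f := (e.symm : l.range →ₐ[K] Localization.Away δ).comp (ρ.codRestrict l.range hρl)
  have f_inj : Function.Injective f := e.symm.injective.comp
    ((AlgHom.injective_codRestrict ρ l.range hρl).2 hρ)
  rw [← trdeg_localization K hS]
  exact lift_trdeg_le_of_injective f f_inj

variable {X Y : Type*}

/-- The Zariski topology on `X` for which `A` is the algebra of regular functions. -/
abbrev zariskiTopology (A : Subalgebra K (X → K)) : TopologicalSpace X :=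
  generateFrom {U | ∃ f, f ∈ A ∧ U = {x | f x ≠ 0}}

/-- The prime ideal of the functions in `A` that vanish at `x`. -/
def vanishingPrime (A : Subalgebra K (X → K)) (x : X) : PrimeSpectrum A :=
  ⟨RingHom.ker ((Pi.evalRingHom _ x).comp A.val.toRingHom), RingHom.ker_isPrime _⟩

lemma isInducing_vanishingPrime [t : TopologicalSpace X] (A : Subalgebra K (X → K))
    (hA : t = zariskiTopology A) :
    IsInducing (vanishingPrime A) := by
  rw [isInducing_iff, PrimeSpectrum.isTopologicalBasis_basic_opens.eq_generateFrom,
    induced_generateFrom_eq, hA, zariskiTopology]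
  congr 1
  ext U
  constructor
  · rintro ⟨f, hf, rfl⟩
    exact ⟨_, ⟨⟨f, hf⟩, rfl⟩, rfl⟩
  · rintro ⟨_, ⟨f, rfl⟩, rfl⟩
    exact ⟨f, f.2, rfl⟩

lemma exists_ne_zero_of_isOpen [t : TopologicalSpace X] (A : Subalgebra K (X → K))
    (hA : t = zariskiTopology A) {U : Set X} (hU : IsOpen U)
    {x : X} (hx : x ∈ U) : ∃ f ∈ A, f x ≠ 0 ∧ ∀ y, f y ≠ 0 → y ∈ U := by
  have basis := PrimeSpectrum.isTopologicalBasis_basic_opens.isInducing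
    (isInducing_vanishingPrime A hA)
  obtain ⟨_, ⟨_, ⟨f, rfl⟩, rfl⟩, hfx, hfU⟩ := basis.exists_subset_of_mem_open hx hU
  exact ⟨f, f.2, hfx, fun y hy => hfU hy⟩

lemma topologicalKrullDim_le_ringKrullDim [t : TopologicalSpace X] (A : Subalgebra K (X → K))
    (hA : t = zariskiTopology A) :
    topologicalKrullDim X ≤ ringKrullDim A :=
  (isInducing_vanishingPrime A hA).topologicalKrullDim_le.trans_eq
    (PrimeSpectrum.topologicalKrullDim_eq_ringKrullDim A)

/-- Pull-back of functions along a map, as a homomorphism of algebras. -/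
def precompAlgHom (K : Type*) [Field K] (j : X → Y) : (Y → K) →ₐ[K] (X → K) :=
  AlgHom.pi fun x => Pi.evalAlgHom K _ (j x)

lemma eq_zariskiTopology_map_precompAlgHom [tX : TopologicalSpace X]
    [tY : TopologicalSpace Y] {j : X → Y} (hj : IsInducing j) {A : Subalgebra K (Y → K)}
    (hA : tY = zariskiTopology A) :
    tX = zariskiTopology (A.map (precompAlgHom K j)) := by
  rw [hj.eq_induced, hA, zariskiTopology, induced_generateFrom_eq]
  congr 1
  ext U
  constructor
  · rintro ⟨_, ⟨q, hq, rfl⟩, rfl⟩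
    exact ⟨_, ⟨q, hq, rfl⟩, rfl⟩
  · rintro ⟨_, ⟨q, hq, rfl⟩, rfl⟩
    exact ⟨_, ⟨q, hq, rfl⟩, rfl⟩

lemma injective_precompAlgHom_of_denseRange [tX : TopologicalSpace X] {A : Subalgebra K (X → K)}
    (hA : tX = zariskiTopology A) {f : Y → X} (hf : DenseRange f) :
    Function.Injective ((precompAlgHom K f).comp A.val) := by
  refine (injective_iff_map_eq_zero _).2 fun a ha => ?_
  by_contra! h
  obtain ⟨x, hx⟩ := Function.ne_iff.1 fun h' => h (Subtype.ext h')
  have isOpen_ne : IsOpen {x | a.1 x ≠ 0} := by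
    rw [hA]
    exact isOpen_generateFrom_of_mem ⟨a, a.2, rfl⟩
  obtain ⟨y, hy⟩ := hf.exists_mem_open isOpen_ne ⟨x, hx⟩
  exact hy (congr_fun ha y)

end KrullDimension

/-! ### Polynomial functions and polynomial maps -/

section CoordinateRing

variable {M N P : Type*} [AddCommGroup M] [Module ℂ M] [AddCommGroup N] [Module ℂ N]
  [AddCommGroup P] [Module ℂ P]

/-- The coordinate ring of a complex vector space `M`: the algebra of functions generated by the
linear forms. -/
def coordinateRing (M : Type*) [AddCommGroup M] [Module ℂ M] : Subalgebra ℂ (M → ℂ) :=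
  Algebra.adjoin ℂ {g : M → ℂ | ∃ φ : M →ₗ[ℂ] ℂ, g = ⇑φ}

/-- Polynomial maps (regular morphisms) between complex vector spaces; testing against all linear
forms keeps the notion free of coordinates. -/
def IsPolynomialMap (g : M → N) : Prop :=
  ∀ φ : N →ₗ[ℂ] ℂ, (fun x => φ (g x)) ∈ coordinateRing M

lemma linearForm_mem_coordinateRing (φ : M →ₗ[ℂ] ℂ) : ⇑φ ∈ coordinateRing M :=
  Algebra.subset_adjoin ⟨φ, rfl⟩

lemma const_mem_coordinateRing (c : ℂ) : (fun _ : M => c) ∈ coordinateRing M :=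
  (coordinateRing M).algebraMap_mem c

lemma exists_eq_div_pow_of_mem_coordinateRing {Δ : M → ℂ} (hΔ : Δ ∈ coordinateRing M)
    {g : M → N} (hg : IsPolynomialMap g) {f : N → ℂ} (hf : f ∈ coordinateRing N) :
    ∃ n : ℕ, ∃ q ∈ coordinateRing M, ∀ x, Δ x ≠ 0 →
      f ((Δ x)⁻¹ • g x) = q x / Δ x ^ n := by
  induction hf using Algebra.adjoin_induction with
  | mem f hf =>
    obtain ⟨φ, rfl⟩ := hf
    exact ⟨1, _, hg φ, fun x _ => by simp [div_eq_inv_mul]⟩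
  | algebraMap c => exact ⟨0, _, const_mem_coordinateRing c, fun x _ => by simp⟩
  | add f f' _ _ hf hf' =>
    obtain ⟨n, q, hq, h⟩ := hf
    obtain ⟨n', q', hq', h'⟩ := hf'
    refine ⟨n + n', q * Δ ^ n' + q' * Δ ^ n,
      add_mem (mul_mem hq (pow_mem hΔ _)) (mul_mem hq' (pow_mem hΔ _)), fun x hx => ?_⟩
    simp only [Pi.add_apply, Pi.mul_apply, Pi.pow_apply, h x hx, h' x hx, pow_add]
    field_simp
  | mul f f' _ _ hf hf' =>
    obtain ⟨n, q, hq, h⟩ := hf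
    obtain ⟨n', q', hq', h'⟩ := hf'
    refine ⟨n + n', q * q', mul_mem hq hq', fun x hx => ?_⟩
    simp only [Pi.mul_apply, h x hx, h' x hx, pow_add, div_mul_div_comm]

namespace IsPolynomialMap

lemma comp_mem {g : M → N} (hg : IsPolynomialMap g) {f : N → ℂ}
    (hf : f ∈ coordinateRing N) : (fun x => f (g x)) ∈ coordinateRing M := by
  obtain ⟨n, q, hq, h⟩ := exists_eq_div_pow_of_mem_coordinateRing
    (const_mem_coordinateRing 1) hg hf
  convert hq using 2 with x
  simpa using h x

lemma linear (l : M →ₗ[ℂ] N) : IsPolynomialMap l := fun φ =>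
  linearForm_mem_coordinateRing (φ ∘ₗ l)

lemma const (c : N) : IsPolynomialMap fun _ : M => c := fun φ =>
  const_mem_coordinateRing (φ c)

lemma of_mem {f : M → ℂ} (hf : f ∈ coordinateRing M) : IsPolynomialMap f := fun φ => by
  have : (fun x => φ (f x)) = (fun _ => φ 1) * f := by
    ext x
    simpa [mul_comm] using φ.map_smul (f x) 1
  exact this ▸ mul_mem (const_mem_coordinateRing _) hf

lemma comp {g : N → P} {f : M → N} (hg : IsPolynomialMap g) (hf : IsPolynomialMap f) :
    IsPolynomialMap fun x => g (f x) := fun φ => hf.comp_mem (hg φ)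

lemma add {f g : M → N} (hf : IsPolynomialMap f) (hg : IsPolynomialMap g) :
    IsPolynomialMap fun x => f x + g x := fun φ => by
  simp only [map_add]
  exact add_mem (hf φ) (hg φ)

lemma smul {f : M → ℂ} {g : M → N} (hf : f ∈ coordinateRing M) (hg : IsPolynomialMap g) :
    IsPolynomialMap fun x => f x • g x := fun φ => by
  simp only [map_smul]
  exact mul_mem hf (hg φ)

lemma sum {ι : Type*} (s : Finset ι) {f : ι → M → N} (hf : ∀ i ∈ s, IsPolynomialMap (f i)) :
    IsPolynomialMap fun x => ∑ i ∈ s, f i x := fun φ => by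
  convert sum_mem (t := s) fun i hi => hf i hi φ using 1
  ext x
  simp

lemma prodMk {f : M → N} {g : M → P} (hf : IsPolynomialMap f) (hg : IsPolynomialMap g) :
    IsPolynomialMap fun x => (f x, g x) := fun φ => by
  convert add_mem (hf (φ ∘ₗ inl ℂ N P)) (hg (φ ∘ₗ inr ℂ N P)) using 1
  ext x
  simp [← map_add]

lemma pi {ι : Type*} [Finite ι] {f : M → ι → N} (hf : ∀ i, IsPolynomialMap fun x => f x i) :
    IsPolynomialMap f := by
  classical
  cases nonempty_fintype ι
  have : f = fun x => ∑ i, LinearMap.single ℂ (fun _ => N) i (f x i) :=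
    funext fun x => (Finset.univ_sum_single (f x)).symm
  rw [this]
  exact sum _ fun i _ => (linear _).comp (hf i)

lemma bilin [FiniteDimensional ℂ N] (B : N →ₗ[ℂ] P →ₗ[ℂ] ℂ) {f : M → N} {g : M → P}
    (hf : IsPolynomialMap f) (hg : IsPolynomialMap g) :
    (fun x => B (f x) (g x)) ∈ coordinateRing M := by
  let b := finBasis ℂ N
  convert sum_mem (t := Finset.univ) fun i _ => mul_mem (hf (b.coord i)) (hg (B (b i))) using 1
  ext x
  conv_lhs => rw [← b.sum_repr (f x)]
  simp only [map_sum, map_smul, LinearMap.sum_apply, LinearMap.smul_apply, Finset.sum_apply,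
    Pi.mul_apply, Basis.coord_apply, smul_eq_mul]

end IsPolynomialMap

section Matrix

variable {n : Type*} [Fintype n] [DecidableEq n] {A : M → Matrix n n ℂ}

lemma det_mem_coordinateRing (hA : ∀ i j, (fun x => A x i j) ∈ coordinateRing M) :
    (fun x => (A x).det) ∈ coordinateRing M := by
  let A' : Matrix n n (coordinateRing M) := .of fun i j => ⟨_, hA i j⟩
  convert A'.det.2 using 1
  ext x
  exact (((Pi.evalRingHom _ x).comp (coordinateRing M).val.toRingHom).map_det A').symm

lemma adjugate_mem_coordinateRing (hA : ∀ i j, (fun x => A x i j) ∈ coordinateRing M)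
    (i j : n) : (fun x => (A x).adjugate i j) ∈ coordinateRing M := by
  let A' : Matrix n n (coordinateRing M) := .of fun i j => ⟨_, hA i j⟩
  convert (A'.adjugate i j).2 using 1
  ext x
  exact (congr_fun₂ (((Pi.evalRingHom _ x).comp
    (coordinateRing M).val.toRingHom).map_adjugate A') i j).symm

end Matrix

lemma exists_surjective_aeval_coordinateRing (M : Type*) [AddCommGroup M] [Module ℂ M]
    [FiniteDimensional ℂ M] :
    ∃ f : MvPolynomial (Fin (finrank ℂ M)) ℂ →ₐ[ℂ] coordinateRing M,
      Function.Surjective f := by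
  let b := finBasis ℂ M
  let c (i : Fin (finrank ℂ M)) : M → ℂ := b.coord i
  have hc : coordinateRing M = (MvPolynomial.aeval c).range := by
    rw [← Algebra.adjoin_range_eq_range_aeval]
    refine le_antisymm (Algebra.adjoin_le ?_) (Algebra.adjoin_le ?_)
    · rintro _ ⟨φ, rfl⟩
      have : ⇑φ = ∑ i, φ (b i) • c i := by
        ext x
        conv_lhs => rw [← b.sum_repr x]
        simp only [c, map_sum, map_smul, smul_eq_mul, Finset.sum_apply, Pi.smul_apply,
          Basis.coord_apply, mul_comm]
      rw [this]
      exact sum_mem fun i _ =>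
        Subalgebra.smul_mem _ (Algebra.subset_adjoin (Set.mem_range_self i)) _
    · rintro _ ⟨i, rfl⟩
      exact linearForm_mem_coordinateRing _
  exact hc ▸ ⟨_, AlgHom.rangeRestrict_surjective _⟩

instance [FiniteDimensional ℂ M] : Algebra.FiniteType ℂ (coordinateRing M) :=
  have ⟨f, hf⟩ := exists_surjective_aeval_coordinateRing M
  .of_surjective f hf

lemma trdeg_coordinateRing_le [FiniteDimensional ℂ M] :
    Algebra.trdeg ℂ (coordinateRing M) ≤ finrank ℂ M := by
  obtain ⟨f, hf⟩ := exists_surjective_aeval_coordinateRing M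
  simpa using lift_trdeg_le_of_surjective f hf

end CoordinateRing

/-! ### The Zariski topology -/

section Zariski

variable {M N P : Type*} [AddCommGroup M] [Module ℂ M] [AddCommGroup N] [Module ℂ N]
  [AddCommGroup P] [Module ℂ P]

/-- A type synonym of the vector space `M`, carrying the Zariski topology. -/
def ZariskiSpace (M : Type*) : Type _ := M

instance : TopologicalSpace (ZariskiSpace M) := zariski M

instance : Nonempty (ZariskiSpace M) := ⟨(0 : M)⟩

lemma isOpen_ne_zero_of_mem_coordinateRing {f : M → ℂ} (hf : f ∈ coordinateRing M) :
    IsOpen (X := ZariskiSpace M) {x : M | f x ≠ 0} :=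
  isOpen_generateFrom_of_mem ⟨f, hf, rfl⟩

lemma continuous_of_eq_inv_smul {S : Type*} [TopologicalSpace S] {j : S → ZariskiSpace M}
    (hj : Continuous j) {Δ : M → ℂ} (hΔ : Δ ∈ coordinateRing M) (Δ_ne : ∀ s, Δ (j s) ≠ 0)
    {g : M → N} (hg : IsPolynomialMap g) {h : S → ZariskiSpace N}
    (h_eq : ∀ s, (h s : N) = (Δ (j s))⁻¹ • g (j s)) : Continuous h := by
  refine continuous_generateFrom_iff.2 ?_
  rintro _ ⟨f, hf, rfl⟩
  obtain ⟨n, q, hq, hfq⟩ := exists_eq_div_pow_of_mem_coordinateRing hΔ hg hf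
  convert (isOpen_ne_zero_of_mem_coordinateRing hq).preimage hj using 1
  ext s
  change f (h s) ≠ 0 ↔ q (j s) ≠ 0
  rw [h_eq, hfq _ (Δ_ne s), Ne, div_eq_zero_iff, or_iff_left (pow_ne_zero n (Δ_ne s))]

lemma IsPolynomialMap.continuous {g : M → N} (hg : IsPolynomialMap g) :
    Continuous (X := ZariskiSpace M) (Y := ZariskiSpace N) g :=
  continuous_of_eq_inv_smul continuous_id (const_mem_coordinateRing 1) (fun _ => one_ne_zero) hg
    fun s => by simp only [inv_one, one_smul]; rfl

lemma exists_polynomial_eval_eq_on_line (x v : M) {f : M → ℂ} (hf : f ∈ coordinateRing M) :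
    ∃ p : Polynomial ℂ, ∀ t, p.eval t = f (x + t • v) := by
  induction hf using Algebra.adjoin_induction with
  | mem f hf =>
    obtain ⟨φ, rfl⟩ := hf
    exact ⟨.C (φ x) + .C (φ v) * .X, fun t => by simp [mul_comm (φ v)]⟩
  | algebraMap c => exact ⟨.C c, fun t => by simp⟩
  | add f g _ _ hf hg =>
    obtain ⟨p, hp⟩ := hf
    obtain ⟨q, hq⟩ := hg
    exact ⟨p + q, fun t => by simp [hp, hq]⟩
  | mul f g _ _ hf hg =>
    obtain ⟨p, hp⟩ := hf
    obtain ⟨q, hq⟩ := hg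
    exact ⟨p * q, fun t => by simp [hp, hq]⟩

/-- On the line joining a nonzero of `f` to a nonzero of `g`, both functions are nonzero
polynomials in one variable. -/
lemma exists_ne_zero_and_ne_zero {f g : M → ℂ} (hf : f ∈ coordinateRing M)
    (hg : g ∈ coordinateRing M) {x y : M} (hx : f x ≠ 0) (hy : g y ≠ 0) :
    ∃ z, f z ≠ 0 ∧ g z ≠ 0 := by
  obtain ⟨p, hp⟩ := exists_polynomial_eval_eq_on_line x (y - x) hf
  obtain ⟨q, hq⟩ := exists_polynomial_eval_eq_on_line x (y - x) hg
  have p_ne : p ≠ 0 := by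
    rintro rfl
    exact hx (by simpa using (hp 0).symm)
  have q_ne : q ≠ 0 := by
    rintro rfl
    exact hy (by simpa using (hq 1).symm)
  obtain ⟨t, ht⟩ : ∃ t, (p * q).eval t ≠ 0 := by
    by_contra! h
    exact mul_ne_zero p_ne q_ne (Polynomial.funext fun t => by simpa using h t)
  rw [Polynomial.eval_mul, hp, hq] at ht
  exact ⟨_, left_ne_zero_of_mul ht, right_ne_zero_of_mul ht⟩

instance : IrreducibleSpace (ZariskiSpace M) where
  isPreirreducible_univ := by
    rintro U V hU hV ⟨x, -, hx⟩ ⟨y, -, hy⟩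
    obtain ⟨f, hf, hfx, hfU⟩ := exists_ne_zero_of_isOpen (t := zariski M) _ rfl hU hx
    obtain ⟨g, hg, hgy, hgV⟩ := exists_ne_zero_of_isOpen (t := zariski M) _ rfl hV hy
    obtain ⟨z, hfz, hgz⟩ := exists_ne_zero_and_ne_zero hf hg hfx hgy
    exact ⟨z, trivial, hfU z hfz, hgV z hgz⟩
  toNonempty := inferInstance

instance : IsDomain (coordinateRing M) :=
  have : NoZeroDivisors (coordinateRing M) := by
    refine ⟨fun {f g} hfg => ?_⟩
    by_contra! h
    obtain ⟨x, hx⟩ := Function.ne_iff.1 fun h' => h.1 (Subtype.ext h')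
    obtain ⟨y, hy⟩ := Function.ne_iff.1 fun h' => h.2 (Subtype.ext h')
    obtain ⟨z, hfz, hgz⟩ := exists_ne_zero_and_ne_zero f.2 g.2 hx hy
    exact mul_ne_zero hfz hgz (congr_fun (congr_arg Subtype.val hfg) z)
  NoZeroDivisors.to_isDomain _

lemma isClosed_submodule_zariskiSpace (S : Submodule ℂ M) :
    IsClosed (X := ZariskiSpace M) (S : Set M) := by
  have : (S : Set M) = ⋂ φ : S.dualAnnihilator, {x | φ.1 x ≠ 0}ᶜ := by
    ext x
    conv_lhs => rw [SetLike.mem_coe, ← Subspace.dualAnnihilator_dualCoannihilator_eq (W := S)]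
    simp only [mem_dualCoannihilator, Set.mem_iInter, Subtype.forall, Set.mem_compl_iff,
      Set.mem_ofPred_eq, not_not]
  rw [this]
  exact isClosed_iInter fun φ =>
    (isOpen_ne_zero_of_mem_coordinateRing (linearForm_mem_coordinateRing φ.1)).isClosed_compl

lemma isIrreducible_submodule_zariskiSpace (S : Submodule ℂ M) :
    IsIrreducible (X := ZariskiSpace M) (S : Set M) := by
  have : (S : Set M) = S.subtype '' Set.univ := (Set.image_univ.trans Subtype.range_coe).symm
  rw [this]
  exact (IrreducibleSpace.isIrreducible_univ (ZariskiSpace S)).image _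
    (IsPolynomialMap.linear S.subtype).continuous.continuousOn

lemma finrank_le_topologicalKrullDim_zariskiSpace [FiniteDimensional ℂ M] :
    (finrank ℂ M : WithBot ℕ∞) ≤ topologicalKrullDim (ZariskiSpace M) := by
  calc (finrank ℂ M : WithBot ℕ∞) = (Module.length ℂ M : WithBot ℕ∞) := by
        rw [Module.length_eq_finrank]; rfl
    _ = Order.krullDim (Submodule ℂ M) := Module.coe_length ℂ M
    _ ≤ topologicalKrullDim (ZariskiSpace M) :=
        Order.krullDim_le_of_strictMono
          (fun S : Submodule ℂ M => (⟨(S : Set M), isIrreducible_submodule_zariskiSpace S,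
            isClosed_submodule_zariskiSpace S⟩ : IrreducibleCloseds (ZariskiSpace M)))
          fun S T (h : S < T) => (SetLike.coe_ssubset_coe.2 h : (S : Set M) ⊂ T)

/-- The regular functions on `X` embed into the localization of the coordinate ring of `P`
at `Δ`. -/
lemma topologicalKrullDim_le_of_rational_parametrization {X : Type*} [TopologicalSpace X]
    [FiniteDimensional ℂ N] [FiniteDimensional ℂ P] {j : X → ZariskiSpace N} (hj : IsInducing j)
    {Δ : P → ℂ} (hΔ : Δ ∈ coordinateRing P) {g : P → N} (hg : IsPolynomialMap g)
    {f : {x : P // Δ x ≠ 0} → X} (hf : DenseRange f)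
    (hjf : ∀ x, (j (f x) : N) = (Δ x)⁻¹ • g x) :
    topologicalKrullDim X ≤ finrank ℂ P := by
  rcases isEmpty_or_nonempty X with hX | hX
  · have : IsEmpty (IrreducibleCloseds X) := ⟨fun Z => hX.false Z.isIrreducible.nonempty.some⟩
    exact Order.krullDim_eq_bot.trans_le bot_le
  obtain ⟨x₀, hx₀⟩ : Nonempty {x : P // Δ x ≠ 0} := hf.nonempty
  let A : Subalgebra ℂ (X → ℂ) := (coordinateRing N).map (precompAlgHom ℂ j)
  have hA : ‹TopologicalSpace X› = zariskiTopology A := eq_zariskiTopology_map_precompAlgHom hj rfl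
  have : Algebra.FiniteType ℂ A := (Subalgebra.fg_iff_finiteType A).1
    (((Subalgebra.fg_iff_finiteType (coordinateRing N)).2 inferInstance).map _)
  have hD : DenseRange (X := ZariskiSpace P) (Subtype.val : {x : P // Δ x ≠ 0} → P) :=
    ((isOpen_ne_zero_of_mem_coordinateRing hΔ).dense ⟨x₀, hx₀⟩).denseRange_val
  have trdeg_le := lift_trdeg_le_of_forall_mul_pow_mem_range
    (injective_precompAlgHom_of_denseRange (tX := zariski P) (A := coordinateRing P) rfl hD)
    (δ := ⟨Δ, hΔ⟩) (Pi.isUnit_iff.2 fun x => x.2.isUnit)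
    (injective_precompAlgHom_of_denseRange hA hf) ?_
  · have := trdeg_le.trans (Cardinal.lift_le.2 trdeg_coordinateRing_le)
    refine (topologicalKrullDim_le_ringKrullDim A hA).trans
      (ringKrullDim_le_of_trdeg_le (K := ℂ) ?_)
    simpa only [Cardinal.lift_natCast, Cardinal.lift_le_nat_iff] using this
  · rintro ⟨_, q, hq, rfl⟩
    obtain ⟨n, p, hp, hpq⟩ := exists_eq_div_pow_of_mem_coordinateRing hΔ hg hq
    refine ⟨n, ⟨p, hp⟩, funext fun x => ?_⟩
    change p x = q (j (f x)) * Δ x ^ n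
    rw [hjf, hpq x x.2, div_mul_cancel₀ _ (pow_ne_zero n x.2)]

end Zariski

/-! ### The Grassmannian -/

section Grassmannian

variable {W : Type*} [AddCommGroup W] [Module ℂ W] {k : ℕ}

/-- The `k`-frames of `W`, i.e. the linearly independent `k`-tuples. -/
def Frame (W : Type*) [AddCommGroup W] [Module ℂ W] (k : ℕ) : Type _ :=
  {v : Fin k → W // LinearIndependent ℂ v}

namespace Frame

/-- The vectors of a frame, as a point of a Zariski space. -/
def vectors (v : Frame W k) : ZariskiSpace (Fin k → W) := v.1

instance : TopologicalSpace (Frame W k) := induced vectors inferInstance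

lemma isInducing_vectors : IsInducing (vectors : Frame W k → ZariskiSpace (Fin k → W)) := ⟨rfl⟩

/-- The subspace spanned by a frame, as a point of the Grassmannian. -/
def span (v : Frame W k) : Grass W k :=
  ⟨Submodule.span ℂ (Set.range v.1), (finrank_span_eq_card v.2).trans (Fintype.card_fin k)⟩

lemma mem_span (v : Frame W k) (a : Fin k) : v.1 a ∈ v.span.1 := subset_span ⟨a, rfl⟩

lemma span_eq_of_forall_mem [FiniteDimensional ℂ W] {v : Frame W k} {F : Grass W k}
    (h : ∀ a, v.1 a ∈ F.1) : v.span = F :=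
  Subtype.ext (eq_of_le_of_finrank_eq (span_le.2 (Set.range_subset_iff.2 h))
    (v.span.2.trans F.2.symm))

lemma surjective_span [FiniteDimensional ℂ W] :
    Function.Surjective (span : Frame W k → Grass W k) := fun F =>
  let b := finBasisOfFinrankEq ℂ F.1 F.2
  ⟨⟨fun a => b a, b.linearIndependent.map' F.1.subtype F.1.ker_subtype⟩,
    span_eq_of_forall_mem fun a => (b a).2⟩

lemma isQuotientMap_span [FiniteDimensional ℂ W] :
    IsQuotientMap (span : Frame W k → Grass W k) :=
  ⟨⟨rfl⟩, surjective_span⟩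

end Frame

/-- The matrix of the images of `k` vectors under `p : W → ℂᵏ`, one row per vector. -/
def frameMatrix (p : W →ₗ[ℂ] Fin k → ℂ) (v : Fin k → W) : Matrix (Fin k) (Fin k) ℂ :=
  .of fun a => p (v a)

/-- The tuple of vectors that, by Cramer's rule, `p` maps to `det (frameMatrix p v)` times the
standard basis of `ℂᵏ`. -/
def cramerFrame (p : W →ₗ[ℂ] Fin k → ℂ) (v : Fin k → W) : Fin k → W :=
  fun a => ∑ b, (frameMatrix p v).adjugate a b • v b

lemma map_sum_smul_eq_vecMul (p : W →ₗ[ℂ] Fin k → ℂ) (v : Fin k → W) (c : Fin k → ℂ) :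
    p (∑ a, c a • v a) = Matrix.vecMul c (frameMatrix p v) := by
  rw [Matrix.vecMul_eq_sum]
  simp only [map_sum, map_smul]
  rfl

lemma map_cramerFrame (p : W →ₗ[ℂ] Fin k → ℂ) (v : Fin k → W) (a : Fin k) :
    p (cramerFrame p v a) = (frameMatrix p v).det • Pi.single a 1 := by
  rw [cramerFrame, map_sum_smul_eq_vecMul]
  calc Matrix.vecMul ((frameMatrix p v).adjugate a) (frameMatrix p v)
      = ((frameMatrix p v).adjugate * frameMatrix p v) a := rfl
    _ = (frameMatrix p v).det • (1 : Matrix (Fin k) (Fin k) ℂ) a := by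
        rw [Matrix.adjugate_mul]; rfl
    _ = (frameMatrix p v).det • Pi.single a 1 := by
        congr 1
        ext b
        rw [Matrix.one_eq_pi_single]

lemma det_frameMatrix_mem_coordinateRing (p : W →ₗ[ℂ] Fin k → ℂ) :
    (fun v : Fin k → W => (frameMatrix p v).det) ∈ coordinateRing (Fin k → W) :=
  det_mem_coordinateRing fun a b =>
    linearForm_mem_coordinateRing (proj b ∘ₗ p ∘ₗ proj (φ := fun _ => W) a)

lemma isPolynomialMap_cramerFrame (p : W →ₗ[ℂ] Fin k → ℂ) :
    IsPolynomialMap (cramerFrame p) := by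
  refine .pi fun a => .sum _ fun b _ => .smul (adjugate_mem_coordinateRing ?_ a b)
    (.linear (proj (φ := fun _ => W) b))
  exact fun a b => linearForm_mem_coordinateRing (proj b ∘ₗ p ∘ₗ proj (φ := fun _ => W) a)

lemma linearIndependent_of_det_frameMatrix_ne_zero {p : W →ₗ[ℂ] Fin k → ℂ} {v : Fin k → W}
    (h : (frameMatrix p v).det ≠ 0) : LinearIndependent ℂ v :=
  .of_comp p (Matrix.linearIndependent_rows_of_det_ne_zero h)

/-- The `k`-dimensional subspaces on which `p : W → ℂᵏ` is injective. -/
def chartDomain (p : W →ₗ[ℂ] Fin k → ℂ) : Set (Grass W k) :=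
  {F | ∀ x ∈ F.1, p x = 0 → x = 0}

lemma span_mem_chartDomain_iff {p : W →ₗ[ℂ] Fin k → ℂ} {v : Frame W k} :
    v.span ∈ chartDomain p ↔ (frameMatrix p v.1).det ≠ 0 := by
  rw [Ne, ← Matrix.exists_vecMul_eq_zero_iff]
  push Not
  simp only [← map_sum_smul_eq_vecMul]
  constructor
  · intro h c hc hpc
    have hv := h _ (sum_mem fun a _ => smul_mem _ (c a) (v.mem_span a)) hpc
    exact hc (funext (Fintype.linearIndependent_iff.1 v.2 c hv))
  · intro h x hx hpx
    obtain ⟨c, rfl⟩ := (mem_span_range_iff_exists_fun ℂ).1 hx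
    obtain rfl : c = 0 := by_contra fun hc => h c hc hpx
    simp

/-- The isomorphism from a subspace in the domain of a chart onto `ℂᵏ`. -/
noncomputable def chartEquiv (p : W →ₗ[ℂ] Fin k → ℂ) (F : chartDomain p) : F.1.1 ≃ₗ[ℂ] Fin k → ℂ :=
  LinearEquiv.ofInjectiveOfFinrankEq (p.domRestrict F.1.1)
    ((injective_iff_map_eq_zero _).2 fun x hx => Subtype.ext (F.2 x x.2 hx))
    (F.1.2.trans (finrank_fin_fun ℂ).symm)

/-- The frame of `F` that `p` maps to the standard basis of `ℂᵏ`; its entries are the coordinates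
of `F` in the chart defined by `p`. -/
noncomputable def normalizedFrame (p : W →ₗ[ℂ] Fin k → ℂ) (F : chartDomain p) : Frame W k :=
  ⟨fun a => (chartEquiv p F).symm (Pi.single a 1), by
    have := (Pi.basisFun ℂ (Fin k)).linearIndependent.map' _ (chartEquiv p F).symm.ker
    simpa [Function.comp_def] using this.map' F.1.1.subtype F.1.1.ker_subtype⟩

variable {p : W →ₗ[ℂ] Fin k → ℂ} {F : chartDomain p}

lemma normalizedFrame_mem (a : Fin k) : (normalizedFrame p F).1 a ∈ F.1.1 :=
  Subtype.coe_prop _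

lemma map_normalizedFrame (a : Fin k) : p ((normalizedFrame p F).1 a) = Pi.single a 1 :=
  (chartEquiv p F).apply_symm_apply _

lemma normalizedFrame_eq {w : Fin k → W} (hw : ∀ a, w a ∈ F.1.1)
    (hpw : ∀ a, p (w a) = Pi.single a 1) : (normalizedFrame p F).1 = w := by
  funext a
  refine sub_eq_zero.1 (F.2 _ (sub_mem (normalizedFrame_mem a) (hw a)) ?_)
  rw [map_sub, map_normalizedFrame, hpw, sub_self]

lemma normalizedFrame_eq_inv_smul_cramerFrame {v : Frame W k} (hv : v.span = F) :
    (normalizedFrame p F).1 = (frameMatrix p v.1).det⁻¹ • cramerFrame p v.1 := by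
  have det_ne : (frameMatrix p v.1).det ≠ 0 := span_mem_chartDomain_iff.1 (hv ▸ F.2)
  refine normalizedFrame_eq (fun a => smul_mem _ _ (hv ▸ ?_)) fun a => ?_
  · exact sum_mem fun b _ => smul_mem _ _ (v.mem_span b)
  · rw [Pi.smul_apply, map_smul, map_cramerFrame, inv_smul_smul₀ det_ne]

variable [FiniteDimensional ℂ W]

lemma exists_mem_chartDomain (F : Grass W k) : ∃ p, F ∈ chartDomain p := by
  let e : F.1 ≃ₗ[ℂ] Fin k → ℂ := (finBasisOfFinrankEq ℂ F.1 F.2).equivFun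
  obtain ⟨p, hp⟩ := exists_extend e.toLinearMap
  refine ⟨p, fun x hx hpx => ?_⟩
  have : e ⟨x, hx⟩ = 0 := (LinearMap.congr_fun hp ⟨x, hx⟩).symm.trans hpx
  exact congr_arg Subtype.val ((LinearEquiv.map_eq_zero_iff e).1 this)

lemma isOpen_linearIndependent :
    IsOpen (X := ZariskiSpace (Fin k → W)) {v : Fin k → W | LinearIndependent ℂ v} := by
  have : {v : Fin k → W | LinearIndependent ℂ v} =
      ⋃ p : W →ₗ[ℂ] Fin k → ℂ, {v | (frameMatrix p v).det ≠ 0} := by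
    ext v
    simp only [Set.mem_iUnion, Set.mem_ofPred_eq]
    refine ⟨fun hv => ?_, fun ⟨p, hp⟩ => linearIndependent_of_det_frameMatrix_ne_zero hp⟩
    obtain ⟨p, hp⟩ := exists_mem_chartDomain (Frame.span ⟨v, hv⟩)
    exact ⟨p, span_mem_chartDomain_iff.1 hp⟩
  exact this ▸ isOpen_iUnion (X := ZariskiSpace (Fin k → W)) fun p =>
    isOpen_ne_zero_of_mem_coordinateRing (det_frameMatrix_mem_coordinateRing p)

lemma isOpen_chartDomain (p : W →ₗ[ℂ] Fin k → ℂ) : IsOpen (chartDomain p) := by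
  rw [← Frame.isQuotientMap_span.isOpen_preimage]
  have : Frame.span ⁻¹' chartDomain p =
      Frame.vectors ⁻¹' {v : Fin k → W | (frameMatrix p v).det ≠ 0} :=
    Set.ext fun v => span_mem_chartDomain_iff
  rw [this]
  exact (isOpen_ne_zero_of_mem_coordinateRing (det_frameMatrix_mem_coordinateRing p)).preimage
    Frame.isInducing_vectors.continuous

lemma span_normalizedFrame : (normalizedFrame p F).span = F :=
  Frame.span_eq_of_forall_mem normalizedFrame_mem

lemma continuous_normalizedFrame : Continuous (normalizedFrame p) := by
  have hq := Frame.isQuotientMap_span.restrictPreimage_isOpen (isOpen_chartDomain p)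
  rw [hq.continuous_iff, Frame.isInducing_vectors.continuous_iff]
  exact continuous_of_eq_inv_smul
    (Frame.isInducing_vectors.continuous.comp continuous_subtype_val)
    (det_frameMatrix_mem_coordinateRing p) (fun v => span_mem_chartDomain_iff.1 v.2)
    (isPolynomialMap_cramerFrame p) fun v => normalizedFrame_eq_inv_smul_cramerFrame rfl

lemma isInducing_normalizedFrame : IsInducing (normalizedFrame p) := by
  refine .of_comp continuous_normalizedFrame Frame.isQuotientMap_span.continuous ?_
  have : Frame.span ∘ normalizedFrame p = Subtype.val := funext fun F => span_normalizedFrame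
  exact this ▸ .subtypeVal

end Grassmannian

/-! ### Self-perpendicular subspaces -/

section Perp

variable {W : Type*} [AddCommGroup W] [Module ℂ W] {B : W →ₗ[ℂ] W →ₗ[ℂ] ℂ} {M N : Submodule ℂ W}

lemma eq_of_le_of_perp_eq_self (hM : perp B M = M) (hN : perp B N = N) (h : M ≤ N) : M = N :=
  h.antisymm fun _ hx => hM.le fun y hy => hN.ge hx y (h hy)

lemma perp_map_of_isometry {T : W ≃ₗ[ℂ] W} (hT : ∀ v w, B (T v) (T w) = B v w)
    (M : Submodule ℂ W) : perp B (M.map T.toLinearMap) = (perp B M).map T.toLinearMap := by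
  ext v
  constructor
  · refine fun hv => ⟨T.symm v, fun w hw => ?_, T.apply_symm_apply v⟩
    rw [← hT, T.apply_symm_apply]
    exact hv _ (mem_map_of_mem hw)
  · rintro ⟨v, hv, rfl⟩ _ ⟨w, hw, rfl⟩
    exact (hT v w).trans (hv w hw)

lemma sup_span_singleton_le_perp (hB : B.IsAlt) {x : W} (hM : M ≤ perp B M)
    (hx : x ∈ perp B M) : M ⊔ span ℂ {x} ≤ perp B (M ⊔ span ℂ {x}) := by
  intro v hv w hw
  obtain ⟨m, hm, _, hc, rfl⟩ := mem_sup.1 hv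
  obtain ⟨m', hm', _, hc', rfl⟩ := mem_sup.1 hw
  obtain ⟨c, rfl⟩ := mem_span_singleton.1 hc
  obtain ⟨c', rfl⟩ := mem_span_singleton.1 hc'
  simp [hM hm m' hm', hx m' hm', hB.eq_iff.1 (hx m hm), hB.self_eq_zero x]

variable [FiniteDimensional ℂ W]

lemma finrank_add_finrank_perp (hB : B.IsAlt) (M : Submodule ℂ W) :
    finrank ℂ M + finrank ℂ (perp B M) =
      finrank ℂ W + finrank ℂ (M ⊓ perp B ⊤ : Submodule ℂ W) := by
  have perp_eq (M : Submodule ℂ W) : perp B M = BilinForm.orthogonal B M :=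
    Submodule.ext fun v => forall₂_congr fun w _ => hB.eq_iff
  rw [perp_eq, perp_eq]
  exact BilinForm.finrank_add_finrank_orthogonal hB.isRefl M

lemma two_mul_finrank_of_perp_eq_self (hB : B.IsAlt) (hM : perp B M = M) :
    2 * finrank ℂ M = finrank ℂ W + finrank ℂ (perp B ⊤) := by
  have h := finrank_add_finrank_perp hB M
  have : M ⊓ perp B ⊤ = perp B ⊤ := inf_eq_right.2 fun x hx => hM.le fun w _ => hx w trivial
  rwa [hM, this, ← two_mul] at h

lemma exists_le_and_perp_eq_self (hB : B.IsAlt) (hM : M ≤ perp B M) :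
    ∃ N, M ≤ N ∧ perp B N = N := by
  obtain ⟨N, ⟨hMN, hN⟩, hmax⟩ := (wellFounded_gt (α := Submodule ℂ W)).has_min
    {N | M ≤ N ∧ N ≤ perp B N} ⟨M, le_rfl, hM⟩
  refine ⟨N, hMN, le_antisymm (fun x hx => ?_) hN⟩
  by_contra hxN
  refine hmax _ ⟨hMN.trans le_sup_left, sup_span_singleton_le_perp hB hN hx⟩ ?_
  exact left_lt_sup.2 fun h => hxN (h (mem_span_singleton_self x))

end Perp

/-! ### Symplectic transvections -/

section Transvection

variable {W : Type*} [AddCommGroup W] [Module ℂ W] {B : W →ₗ[ℂ] W →ₗ[ℂ] ℂ} (hB : B.IsAlt)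
  {M N : Submodule ℂ W}

/-- The symplectic transvection `v ↦ v + B(v, a) a`. -/
noncomputable def symplecticTransvection (a : W) : W ≃ₗ[ℂ] W :=
  LinearEquiv.transvection (f := B.flip a) (v := a) (hB a)

lemma symplecticTransvection_apply (a v : W) : symplecticTransvection hB a v = v + B v a • a := rfl

lemma symplecticTransvection_isometry (a v w : W) :
    B (symplecticTransvection hB a v) (symplecticTransvection hB a w) = B v w := by
  simp only [symplecticTransvection_apply, map_add, map_smul, LinearMap.add_apply,
    LinearMap.smul_apply, smul_eq_mul, hB.self_eq_zero a, ← hB.neg a w]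
  ring

lemma exists_symplecticTransvection_apply_eq {x y : W} (hxy : B x y ≠ 0) :
    ∃ c : ℂ, symplecticTransvection hB (c • (y - x)) x = y := by
  obtain ⟨c, hc⟩ := IsAlgClosed.exists_pow_nat_eq (B x y)⁻¹ two_pos
  refine ⟨c, ?_⟩
  have : c * B x y * c = 1 := by
    rw [show c * B x y * c = c ^ 2 * B x y by ring, hc, inv_mul_cancel₀ hxy]
  simp only [symplecticTransvection_apply, map_smul, map_sub, hB.self_eq_zero x, sub_zero,
    smul_smul, smul_eq_mul, this, one_smul, add_sub_cancel]

lemma exists_inf_lt_map_symplecticTransvection_inf (hM : perp B M = M) (hN : perp B N = N)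
    (hNM : ¬ N ≤ M) :
    ∃ a, N ⊓ M < N.map (symplecticTransvection hB a).toLinearMap ⊓ M := by
  obtain ⟨x, hxN, hxM⟩ := SetLike.not_le_iff_exists.1 hNM
  obtain ⟨y, hyM, hxy⟩ : ∃ y ∈ M, B x y ≠ 0 := by
    by_contra! h
    exact hxM (hM.le h)
  obtain ⟨c, hc⟩ := exists_symplecticTransvection_apply_eq hB hxy
  refine ⟨c • (y - x), SetLike.lt_iff_le_and_exists.2 ⟨?_, y, mem_inf.2 ⟨⟨x, hxN, hc⟩, hyM⟩, ?_⟩⟩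
  · rintro z ⟨hzN, hzM⟩
    have hzx : B z x = 0 := hN.ge hzN x hxN
    have hzy : B z y = 0 := hM.ge hzM y hyM
    exact mem_inf.2 ⟨⟨z, hzN, by simp [symplecticTransvection_apply, hzx, hzy]⟩, hzM⟩
  · exact fun hy => hxy (hN.ge hxN y hy.1)

/-- The product of the symplectic transvections along `n` vectors. -/
noncomputable def transvectionProd : ∀ {n : ℕ}, (Fin n → W) → W ≃ₗ[ℂ] W
  | 0, _ => .refl ℂ W
  | _ + 1, a => (symplecticTransvection hB (a 0)).trans (transvectionProd (Fin.tail a))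

lemma transvectionProd_zero (n : ℕ) :
    transvectionProd hB (0 : Fin n → W) = .refl ℂ W := by
  induction n with
  | zero => rfl
  | succ n ih =>
    ext v
    change transvectionProd hB (0 : Fin n → W) (symplecticTransvection hB 0 v) = v
    simp [ih, symplecticTransvection_apply]

lemma transvectionProd_isometry {n : ℕ} (a : Fin n → W) (v w : W) :
    B (transvectionProd hB a v) (transvectionProd hB a w) = B v w := by
  induction n generalizing v w with
  | zero => rfl
  | succ n ih => exact (ih _ _ _).trans (symplecticTransvection_isometry hB _ _ _)

lemma isPolynomialMap_transvectionProd [FiniteDimensional ℂ W] {P : Type*} [AddCommGroup P]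
    [Module ℂ P] {n : ℕ} {a : P → Fin n → W} {g : P → W} (ha : ∀ i, IsPolynomialMap fun x => a x i)
    (hg : IsPolynomialMap g) : IsPolynomialMap fun x => transvectionProd hB (a x) (g x) := by
  induction n generalizing g with
  | zero => exact hg
  | succ n ih => exact ih (fun i => ha i.succ) (hg.add (.smul (hg.bilin B (ha 0)) (ha 0)))

/-- Each transvection enlarges the intersection with `M`, until it is all of `M`. -/
lemma exists_map_transvectionProd_eq [FiniteDimensional ℂ W] {n : ℕ} (hM : perp B M = M)
    (hN : perp B N = N) (h : finrank ℂ M ≤ finrank ℂ (N ⊓ M : Submodule ℂ W) + n) :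
    ∃ a : Fin n → W, N.map (transvectionProd hB a).toLinearMap = M := by
  induction n generalizing N with
  | zero =>
    have : N ⊓ M = M := eq_of_le_of_finrank_le inf_le_right h
    exact ⟨0, (N.map_id).trans (eq_of_le_of_perp_eq_self hM hN (inf_eq_right.1 this)).symm⟩
  | succ n ih =>
    by_cases hNM : N ≤ M
    · refine ⟨0, ?_⟩
      rw [transvectionProd_zero]
      exact (N.map_id).trans (eq_of_le_of_perp_eq_self hN hM hNM)
    · obtain ⟨a₀, ha₀⟩ := exists_inf_lt_map_symplecticTransvection_inf hB hM hN hNM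
      have hT := perp_map_of_isometry (symplecticTransvection_isometry hB a₀) N
      rw [hN] at hT
      obtain ⟨a, ha⟩ := ih hT (by have := finrank_lt_finrank_of_lt ha₀; omega)
      exact ⟨Fin.cons a₀ a, ((map_comp _ _ N).trans ha :)⟩

end Transvection

/-! ### The isotropic Grassmannian -/

section IsotropicGrass

variable {W : Type*} [AddCommGroup W] [Module ℂ W] {k : ℕ}

/-- The Grassmannian of isotropic `k`-dimensional subspaces. -/
abbrev IsotropicGrass (B : W →ₗ[ℂ] W →ₗ[ℂ] ℂ) (k : ℕ) : Type _ :=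
  {F : Grass W k // F.1 ≤ perp B F.1}

lemma Frame.span_le_perp_iff {B : W →ₗ[ℂ] W →ₗ[ℂ] ℂ} {v : Frame W k} :
    v.span.1 ≤ perp B v.span.1 ↔ ∀ a b, B (v.1 a) (v.1 b) = 0 := by
  refine ⟨fun h a b => h (v.mem_span a) _ (v.mem_span b), fun h x hx y hy => ?_⟩
  obtain ⟨c, rfl⟩ := (mem_span_range_iff_exists_fun ℂ).1 hx
  obtain ⟨c', rfl⟩ := (mem_span_range_iff_exists_fun ℂ).1 hy
  simp [h]

variable [FiniteDimensional ℂ W]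

lemma isClosed_setOf_le_perp (B : W →ₗ[ℂ] W →ₗ[ℂ] ℂ) (k : ℕ) :
    IsClosed {F : Grass W k | F.1 ≤ perp B F.1} := by
  rw [← Frame.isQuotientMap_span.isClosed_preimage]
  have : Frame.span ⁻¹' {F : Grass W k | F.1 ≤ perp B F.1} =
      ⋂ (a) (b), {v : Frame W k | B (v.1 a) (v.1 b) = 0} := by
    ext v
    simpa only [Set.mem_iInter] using! Frame.span_le_perp_iff (B := B) (v := v)
  rw [this]
  refine isClosed_iInter fun a => isClosed_iInter fun b => isOpen_compl_iff.1 ?_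
  have hB : (fun v : Fin k → W => B (v a) (v b)) ∈ coordinateRing (Fin k → W) :=
    IsPolynomialMap.bilin B (.linear (proj (φ := fun _ => W) a))
      (.linear (proj (φ := fun _ => W) b))
  exact (isOpen_ne_zero_of_mem_coordinateRing hB).preimage Frame.isInducing_vectors.continuous

variable {B : W →ₗ[ℂ] W →ₗ[ℂ] ℂ} {M : Submodule ℂ W}

lemma exists_transvectionProd_comp_eq (hB : B.IsAlt) (hM : perp B M = M) {v : Frame W k}
    (hv : v.span.1 ≤ perp B v.span.1) :
    ∃ (a : Fin (finrank ℂ W) → W) (u : Fin k → M),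
      LinearIndependent ℂ u ∧ ∀ i, transvectionProd hB a (u i) = v.1 i := by
  obtain ⟨N, hvN, hN⟩ := exists_le_and_perp_eq_self hB hv
  obtain ⟨a, ha⟩ := exists_map_transvectionProd_eq hB hN hM (le_add_left (finrank_le N))
  have h (i) : ∃ u : M, transvectionProd hB a u = v.1 i := by
    obtain ⟨u, hu, huv⟩ := ha.ge (hvN (v.mem_span i))
    exact ⟨⟨u, hu⟩, huv⟩
  choose u hu using h
  refine ⟨a, u, .of_comp ((transvectionProd hB a).toLinearMap ∘ₗ M.subtype) ?_, hu⟩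
  convert v.2
  exact funext hu

lemma irreducibleSpace_isotropicGrass (hB : B.IsAlt) (hM : perp B M = M) (hk : k ≤ finrank ℂ M) :
    IrreducibleSpace (IsotropicGrass B k) := by
  let P := (Fin (finrank ℂ W) → W) × (Fin k → M)
  let S : Set (ZariskiSpace P) := {x : P | LinearIndependent ℂ x.2}
  have hS : IrreducibleSpace S := by
    have isOpen_S : IsOpen S := isOpen_linearIndependent.preimage
      (IsPolynomialMap.linear (snd ℂ (Fin (finrank ℂ W) → W) (Fin k → M))).continuous
    have nonempty_S : S.Nonempty := ⟨((0, fun i => finBasis ℂ M (i.castLE hk)) : P),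
      (finBasis ℂ M).linearIndependent.comp _ (Fin.castLE_injective hk)⟩
    have := nonempty_S.to_subtype
    exact isOpen_S.isOpenEmbedding_subtypeVal.irreducibleSpace
  let g (x : P) (i : Fin k) : W := transvectionProd hB x.1 (x.2 i)
  have hg : IsPolynomialMap g := .pi fun i => isPolynomialMap_transvectionProd hB
    (fun j => .linear (proj (φ := fun _ => W) j ∘ₗ fst ℂ (Fin (finrank ℂ W) → W) (Fin k → M)))
    (.linear (M.subtype ∘ₗ proj (φ := fun _ => M) i ∘ₗ snd ℂ (Fin (finrank ℂ W) → W) (Fin k → M)))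
  let frame (x : S) : Frame W k := ⟨g x.1,
    (LinearIndependent.map' x.2 M.subtype M.ker_subtype).map' _ (transvectionProd hB _).ker⟩
  have continuous_frame : Continuous frame :=
    Frame.isInducing_vectors.continuous_iff.2 (hg.continuous.comp continuous_subtype_val)
  let f (x : S) : IsotropicGrass B k := ⟨(frame x).span, Frame.span_le_perp_iff.2 fun a b =>
    (transvectionProd_isometry hB _ _ _).trans (hM.ge (Subtype.coe_prop _) _ (Subtype.coe_prop _))⟩
  have continuous_f : Continuous f :=
    (Frame.isQuotientMap_span.continuous.comp continuous_frame).subtype_mk _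
  have surjective_f : Function.Surjective f := by
    rintro ⟨F, hF⟩
    obtain ⟨v, rfl⟩ := Frame.surjective_span F
    obtain ⟨a, u, hu, huv⟩ := exists_transvectionProd_comp_eq hB hM hF
    exact ⟨⟨((a, u) : P), hu⟩, Subtype.ext (congr_arg Frame.span (Subtype.ext (funext huv)))⟩
  have := (IrreducibleSpace.isIrreducible_univ S).image f continuous_f.continuousOn
  rw [Set.image_univ, surjective_f.range_eq] at this
  exact (irreducibleSpace_def _).2 this

end IsotropicGrass

/-! ### Normal form of an alternating form -/

section Hyperbolic

variable {W : Type*} [AddCommGroup W] [Module ℂ W]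

/-- The `e i` and the `f i` span isotropic subspaces and are dual to each other with respect to `B`,
so that together they span an orthogonal sum of hyperbolic planes. -/
structure IsHyperbolicSystem (B : W →ₗ[ℂ] W →ₗ[ℂ] ℂ) {m : ℕ} (e f : Fin m → W) : Prop where
  left_left : ∀ i j, B (e i) (e j) = 0
  right_right : ∀ i j, B (f i) (f j) = 0
  left_right : ∀ i j, B (e i) (f j) = if i = j then 1 else 0

/-- The combination of the `e i` and `f i` with given coefficients. -/
def hyperbolicSum {m : ℕ} (e f : Fin m → W) : (Fin m → ℂ) × (Fin m → ℂ) →ₗ[ℂ] W :=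
  (Fintype.linearCombination ℂ e).coprod (Fintype.linearCombination ℂ f)

/-- The coordinates of a vector along a hyperbolic system. -/
def hyperbolicCoords (B : W →ₗ[ℂ] W →ₗ[ℂ] ℂ) {m : ℕ} (e f : Fin m → W) :
    W →ₗ[ℂ] (Fin m → ℂ) × (Fin m → ℂ) :=
  (LinearMap.pi fun i => B.flip (f i)).prod (LinearMap.pi fun i => B (e i))

variable {B : W →ₗ[ℂ] W →ₗ[ℂ] ℂ} {m : ℕ} {e f : Fin m → W}

lemma mem_ker_hyperbolicCoords {w : W} :
    w ∈ ker (hyperbolicCoords B e f) ↔ (∀ i, B w (f i) = 0) ∧ ∀ i, B (e i) w = 0 := by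
  simp [hyperbolicCoords, funext_iff]

lemma perp_top_le_ker_hyperbolicCoords (hB : B.IsAlt) :
    perp B ⊤ ≤ ker (hyperbolicCoords B e f) := fun _ hw =>
  mem_ker_hyperbolicCoords.2 ⟨fun _ => hw _ trivial, fun _ => hB.eq_iff.1 (hw _ trivial)⟩

lemma apply_hyperbolicSum (hB : B.IsAlt) (x : (Fin m → ℂ) × (Fin m → ℂ)) (w : W) :
    B (hyperbolicSum e f x) w =
      x.1 ⬝ᵥ (hyperbolicCoords B e f w).2 - x.2 ⬝ᵥ (hyperbolicCoords B e f w).1 := by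
  simp [hyperbolicSum, hyperbolicCoords, Fintype.linearCombination_apply, dotProduct,
    ← hB.neg w, Finset.sum_neg_distrib, sub_eq_add_neg]

lemma apply_hyperbolicSum_of_mem_ker (hB : B.IsAlt) (x : (Fin m → ℂ) × (Fin m → ℂ)) {w : W}
    (hw : w ∈ ker (hyperbolicCoords B e f)) : B (hyperbolicSum e f x) w = 0 := by
  simp [apply_hyperbolicSum hB, LinearMap.mem_ker.1 hw]

namespace IsHyperbolicSystem

lemma hyperbolicCoords_hyperbolicSum (h : IsHyperbolicSystem B e f)
    (x : (Fin m → ℂ) × (Fin m → ℂ)) : hyperbolicCoords B e f (hyperbolicSum e f x) = x := by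
  ext i <;> simp [hyperbolicSum, hyperbolicCoords, Fintype.linearCombination_apply, h.left_left,
    h.right_right, h.left_right]

lemma cons (hB : B.IsAlt) (h : IsHyperbolicSystem B e f) {x y : W}
    (hx : x ∈ ker (hyperbolicCoords B e f)) (hy : y ∈ ker (hyperbolicCoords B e f))
    (hxy : B x y = 1) :
    IsHyperbolicSystem B (Fin.cons x e : Fin (m + 1) → W) (Fin.cons y f : Fin (m + 1) → W) := by
  rw [mem_ker_hyperbolicCoords] at hx hy
  constructor <;> intro i j <;> cases i using Fin.cases <;> cases j using Fin.cases
  all_goals simp [hB.self_eq_zero, hx, hy, hxy, h.left_left, h.right_right, h.left_right,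
    hB.eq_iff.1 (hx.2 _), hB.eq_iff.1 (hy.1 _), (Fin.succ_ne_zero _).symm]

lemma ker_hyperbolicCoords_le_perp_top (h : IsHyperbolicSystem B e f) (hB : B.IsAlt)
    (h₀ : ∀ x ∈ ker (hyperbolicCoords B e f), ∀ y ∈ ker (hyperbolicCoords B e f), B x y = 0) :
    ker (hyperbolicCoords B e f) ≤ perp B ⊤ := by
  intro x hx w _
  let z := hyperbolicSum e f (hyperbolicCoords B e f w)
  have hwz : w - z ∈ ker (hyperbolicCoords B e f) := by
    rw [LinearMap.mem_ker, map_sub, h.hyperbolicCoords_hyperbolicSum, sub_self]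
  calc B x w = B x z + B x (w - z) := by rw [← map_add, add_sub_cancel]
    _ = 0 := by rw [hB.eq_iff.1 (apply_hyperbolicSum_of_mem_ker hB _ hx), h₀ x hx _ hwz, add_zero]

lemma apply_hyperbolicSum_add (h : IsHyperbolicSystem B e f) (hB : B.IsAlt)
    (x x' : (Fin m → ℂ) × (Fin m → ℂ)) (y y' : ker (hyperbolicCoords B e f)) :
    B (hyperbolicSum e f x + y) (hyperbolicSum e f x' + y') =
      x.1 ⬝ᵥ x'.2 - x.2 ⬝ᵥ x'.1 + B y y' := by
  have hyx : B y (hyperbolicSum e f x') = 0 :=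
    hB.eq_iff.1 (apply_hyperbolicSum_of_mem_ker hB x' y.2)
  simp only [map_add, LinearMap.add_apply, hyx, apply_hyperbolicSum_of_mem_ker hB x y'.2,
    apply_hyperbolicSum hB, h.hyperbolicCoords_hyperbolicSum, add_zero, zero_add]

variable [FiniteDimensional ℂ W]

lemma finrank_ker_hyperbolicCoords (h : IsHyperbolicSystem B e f) :
    finrank ℂ (ker (hyperbolicCoords B e f)) + 2 * m = finrank ℂ W := by
  have := finrank_range_add_finrank_ker (hyperbolicCoords B e f)
  rw [range_eq_top.2 (Function.RightInverse.surjective h.hyperbolicCoords_hyperbolicSum),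
    finrank_top, finrank_prod, finrank_fin_fun] at this
  omega

/-- The decomposition of `W` as the span of a hyperbolic system and its orthogonal complement. -/
noncomputable def decomposition (h : IsHyperbolicSystem B e f) :
    (((Fin m → ℂ) × (Fin m → ℂ)) × ker (hyperbolicCoords B e f)) ≃ₗ[ℂ] W :=
  .ofInjectiveOfFinrankEq
    ((hyperbolicSum e f).coprod (ker (hyperbolicCoords B e f)).subtype)
    ((injective_iff_map_eq_zero _).2 fun x hx => by
      have hx₁ : x.1 = 0 := by
        simpa [h.hyperbolicCoords_hyperbolicSum] using congr_arg (hyperbolicCoords B e f) hx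
      simpa [Prod.ext_iff, hx₁] using hx)
    (by rw [← h.finrank_ker_hyperbolicCoords]; simp only [finrank_prod, finrank_fin_fun]; ring)

lemma ker_hyperbolicCoords_eq_perp_top (h : IsHyperbolicSystem B e f) (hB : B.IsAlt)
    (hm : finrank ℂ (W ⧸ perp B ⊤) = 2 * m) : ker (hyperbolicCoords B e f) = perp B ⊤ := by
  refine (eq_of_le_of_finrank_eq (perp_top_le_ker_hyperbolicCoords hB) ?_).symm
  have := h.finrank_ker_hyperbolicCoords
  have := finrank_quotient_add_finrank (perp B ⊤)
  omega

lemma exists_apply_eq_one (h : IsHyperbolicSystem B e f) (hB : B.IsAlt)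
    (hm : 2 * m < finrank ℂ (W ⧸ perp B ⊤)) :
    ∃ x ∈ ker (hyperbolicCoords B e f), ∃ y ∈ ker (hyperbolicCoords B e f), B x y = 1 := by
  have : ¬ ker (hyperbolicCoords B e f) ≤ perp B ⊤ := fun hle => by
    have := finrank_mono hle
    have := h.finrank_ker_hyperbolicCoords
    have := finrank_quotient_add_finrank (perp B ⊤)
    omega
  contrapose! this
  refine h.ker_hyperbolicCoords_le_perp_top hB fun x hx y hy => by_contra fun hxy => ?_
  exact this x hx _ (smul_mem _ (B x y)⁻¹ hy) (by rw [map_smul, smul_eq_mul, inv_mul_cancel₀ hxy])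

end IsHyperbolicSystem

variable [FiniteDimensional ℂ W]

lemma exists_isHyperbolicSystem (hB : B.IsAlt) {m : ℕ} (hm : 2 * m ≤ finrank ℂ (W ⧸ perp B ⊤)) :
    ∃ e f : Fin m → W, IsHyperbolicSystem B e f := by
  induction m with
  | zero => exact ⟨![], ![], ⟨nofun, nofun, nofun⟩⟩
  | succ m ih =>
    obtain ⟨e, f, h⟩ := ih (by omega)
    obtain ⟨x, hx, y, hy, hxy⟩ := h.exists_apply_eq_one hB (by omega)
    exact ⟨_, _, h.cons hB hx hy hxy⟩

/-- The coordinate space of `normalForm`. The first factor combines one half of the hyperbolic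
planes with the space on which the form vanishes, since it is the projection to this factor that
defines the big cell of the isotropic Grassmannian. -/
abbrev NormalFormSpace (m s : ℕ) (T : Type*) : Type _ := (Fin m ⊕ Fin s → ℂ) × (Fin m → ℂ) × T

/-- The orthogonal sum of `m` hyperbolic planes, the zero form on `Fin s → ℂ`, and `β`. -/
def normalForm {T : Type*} [AddCommGroup T] [Module ℂ T] (β : T →ₗ[ℂ] T →ₗ[ℂ] ℂ) {m s : ℕ}
    (x y : NormalFormSpace m s T) : ℂ :=
  (x.1 ∘ Sum.inl) ⬝ᵥ y.2.1 - x.2.1 ⬝ᵥ (y.1 ∘ Sum.inl) + β x.2.2 y.2.2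

lemma exists_normalForm (hB : B.IsAlt) {m s n : ℕ} (hW : finrank ℂ W = 2 * m + s + n)
    (hm : 2 * m ≤ finrank ℂ (W ⧸ perp B ⊤)) (hs : s = 0 ∨ finrank ℂ (W ⧸ perp B ⊤) = 2 * m) :
    ∃ (Ψ : NormalFormSpace m s (Fin n → ℂ) ≃ₗ[ℂ] W) (β : (Fin n → ℂ) →ₗ[ℂ] (Fin n → ℂ) →ₗ[ℂ] ℂ),
      β.IsAlt ∧ (s = 0 ∨ β = 0) ∧ ∀ x y, B (Ψ x) (Ψ y) = normalForm β x y := by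
  obtain ⟨e, f, h⟩ := exists_isHyperbolicSystem hB hm
  let K := ker (hyperbolicCoords B e f)
  let u : ((Fin s → ℂ) × (Fin n → ℂ)) ≃ₗ[ℂ] K := .ofFinrankEq _ _ (by
    have := h.finrank_ker_hyperbolicCoords
    simp only [finrank_prod, finrank_fin_fun, K]
    omega)
  let Ψ : NormalFormSpace m s (Fin n → ℂ) ≃ₗ[ℂ] W :=
    (LinearEquiv.sumArrowLequivProdArrow (Fin m) (Fin s) ℂ ℂ).prodCongr (.refl ℂ _) ≪≫ₗ
      .prodProdProdComm ℂ _ _ _ _ ≪≫ₗ (LinearEquiv.refl ℂ _).prodCongr u ≪≫ₗ h.decomposition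
  let inclusion : (Fin n → ℂ) →ₗ[ℂ] W := K.subtype ∘ₗ u.toLinearMap ∘ₗ inr ℂ _ _
  have apply_inclusion (a a' : Fin s → ℂ) (t t' : Fin n → ℂ) :
      B (u (a, t)) (u (a', t')) = B (inclusion t) (inclusion t') := by
    rcases hs with rfl | hs
    · rw [Subsingleton.elim a 0, Subsingleton.elim a' 0]
      rfl
    · have mem_perp (x : K) : (x : W) ∈ perp B ⊤ :=
        (h.ker_hyperbolicCoords_eq_perp_top hB hs).le x.2
      exact (mem_perp _ _ trivial).trans (mem_perp (u (0, t)) _ trivial).symm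
  refine ⟨Ψ, B.compl₁₂ inclusion inclusion, fun t => hB _, hs.imp_right fun hs => ?_, fun x y => ?_⟩
  · ext t t'
    exact (h.ker_hyperbolicCoords_eq_perp_top hB hs).le (u _).2 _ trivial
  · exact (h.apply_hyperbolicSum_add hB _ _ _ _).trans (congr_arg _ (apply_inclusion _ _ _ _))

end Hyperbolic

/-! ### The big cell -/

section Cell

variable {m s : ℕ} {T : Type*} [AddCommGroup T] [Module ℂ T] (β : T →ₗ[ℂ] T →ₗ[ℂ] ℂ)

/-- The parameter space of the big cell. -/
abbrev CellParam (m s : ℕ) (T : Type*) : Type _ := (Sym2 (Fin m) → ℂ) × (Fin m ⊕ Fin s → T)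

/-- The middle components of the vectors of the big cell. In a tuple of vectors whose first
components are the standard basis, isotropy determines the antisymmetric part of the `inl` block
and all of the `inr` block. -/
noncomputable def cellEntry (x : CellParam m s T) : Fin m ⊕ Fin s → Fin m → ℂ
  | .inl i, l => x.1 s(i, l) + 1 / 2 * β (x.2 (.inl i)) (x.2 (.inl l))
  | .inr j, l => -β (x.2 (.inl l)) (x.2 (.inr j))

/-- The polynomial parametrization of the isotropic tuples for `normalForm β` whose first components
are the standard basis. -/
noncomputable def cellVector (x : CellParam m s T) (a : Fin m ⊕ Fin s) : NormalFormSpace m s T :=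
  (Pi.single a 1, cellEntry β x a, x.2 a)

/-- The left inverse of `cellVector`. -/
noncomputable def cellCoord : (Fin m ⊕ Fin s → NormalFormSpace m s T) →ₗ[ℂ] CellParam m s T where
  toFun v := (fun z => z.lift ⟨fun i l => 1 / 2 * ((v (.inl i)).2.1 l + (v (.inl l)).2.1 i),
    fun _ _ => by simp only [add_comm]⟩, fun a => (v a).2.2)
  map_add' v w := by
    refine Prod.ext (funext fun z => ?_) rfl
    induction z
    simp only [Sym2.lift_mk, Pi.add_apply, Prod.fst_add, Prod.snd_add]
    ring
  map_smul' c v := by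
    refine Prod.ext (funext fun z => ?_) rfl
    induction z
    simp only [Sym2.lift_mk, Pi.smul_apply, Prod.smul_fst, Prod.smul_snd, smul_eq_mul,
      RingHom.id_apply]
    ring

lemma cellCoord_fst_mk (v : Fin m ⊕ Fin s → NormalFormSpace m s T) (i l : Fin m) :
    (cellCoord v).1 s(i, l) = 1 / 2 * ((v (.inl i)).2.1 l + (v (.inl l)).2.1 i) := rfl

lemma cellCoord_snd (v : Fin m ⊕ Fin s → NormalFormSpace m s T) (a : Fin m ⊕ Fin s) :
    (cellCoord v).2 a = (v a).2.2 := rfl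

lemma isPolynomialMap_cellVector [FiniteDimensional ℂ T] (a : Fin m ⊕ Fin s) :
    IsPolynomialMap fun x => cellVector β x a := by
  have hT (b) : IsPolynomialMap fun x : CellParam m s T => x.2 b :=
    .linear (proj (φ := fun _ => T) b ∘ₗ LinearMap.snd ℂ (Sym2 (Fin m) → ℂ) _)
  refine .prodMk (.const _) (.prodMk (.pi fun l => .of_mem ?_) (hT a))
  rcases a with i | j
  · have hx : (fun x : CellParam m s T => x.1 s(i, l)) ∈ coordinateRing (CellParam m s T) :=
      linearForm_mem_coordinateRing (proj (φ := fun _ : Sym2 (Fin m) => ℂ) s(i, l) ∘ₗ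
        LinearMap.fst ℂ (Sym2 (Fin m) → ℂ) (Fin m ⊕ Fin s → T))
    exact add_mem hx (mul_mem (const_mem_coordinateRing _) (IsPolynomialMap.bilin β (hT _) (hT _)))
  · exact neg_mem (IsPolynomialMap.bilin β (hT _) (hT _))

variable {β}

lemma normalForm_of_fst_eq_single {x y : NormalFormSpace m s T} {a b : Fin m ⊕ Fin s}
    (hx : x.1 = Pi.single a 1) (hy : y.1 = Pi.single b 1) :
    normalForm β x y = Sum.elim y.2.1 0 a - Sum.elim x.2.1 0 b + β x.2.2 y.2.2 := by
  have comp_inl (a : Fin m ⊕ Fin s) : (Pi.single a (1 : ℂ) : Fin m ⊕ Fin s → ℂ) ∘ Sum.inl =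
      Sum.elim (fun i => Pi.single i 1) 0 a := by
    cases a <;> ext l <;> simp [Pi.single_apply]
  rw [normalForm, hx, hy, comp_inl, comp_inl]
  cases a <;> cases b <;> simp

lemma normalForm_cellVector (hβ : β.IsAlt) (hs : s = 0 ∨ β = 0) (x : CellParam m s T)
    (a b : Fin m ⊕ Fin s) : normalForm β (cellVector β x a) (cellVector β x b) = 0 := by
  rw [normalForm_of_fst_eq_single rfl rfl]
  rcases a with i | i <;> rcases b with j | j <;> simp only [cellVector, cellEntry, Sum.elim_inl,
    Sum.elim_inr, Pi.zero_apply]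
  · rw [← hβ.neg (x.2 (.inl i)), Sym2.eq_swap]
    ring
  · ring
  · rw [← hβ.neg (x.2 (.inl j))]
    ring
  · rcases hs with rfl | rfl
    · exact i.elim0
    · simp

lemma cellCoord_cellVector (hβ : β.IsAlt) (x : CellParam m s T) :
    cellCoord (cellVector β x) = x := by
  refine Prod.ext (funext fun z => ?_) rfl
  induction z with
  | h i l =>
    simp only [cellCoord_fst_mk, cellVector, cellEntry]
    rw [← hβ.neg (x.2 (.inl i)), Sym2.eq_swap (a := l)]
    ring

lemma cellVector_cellCoord {v : Fin m ⊕ Fin s → NormalFormSpace m s T}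
    (hv : ∀ a, (v a).1 = Pi.single a 1) (hvβ : ∀ a b, normalForm β (v a) (v b) = 0) :
    cellVector β (cellCoord v) = v := by
  refine funext fun a => Prod.ext (hv a).symm (Prod.ext (funext fun l => ?_) rfl)
  cases a with
  | inl i =>
    have := hvβ (.inl i) (.inl l)
    rw [normalForm_of_fst_eq_single (hv _) (hv _)] at this
    simp only [cellCoord_fst_mk, cellCoord_snd, cellVector, cellEntry, Sum.elim_inl] at this ⊢
    linear_combination (1 / 2) * this
  | inr j =>
    have := hvβ (.inl l) (.inr j)
    rw [normalForm_of_fst_eq_single (hv _) (hv _)] at this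
    simp only [cellCoord_snd, cellVector, cellEntry, Sum.elim_inl, Sum.elim_inr,
      Pi.zero_apply] at this ⊢
    linear_combination -this

variable {W : Type*} [AddCommGroup W] [Module ℂ W]

/-- A polynomial parametrization, by a vector space `P`, of the isotropic tuples of vectors that
`chart` maps to the standard basis, with a linear left inverse `coord`. -/
structure IsotropicCell (B : W →ₗ[ℂ] W →ₗ[ℂ] ℂ) (κ : Type*) [DecidableEq κ] (P : Type*)
    [AddCommGroup P] [Module ℂ P] where
  chart : W →ₗ[ℂ] κ → ℂ
  param : P → κ → W
  isPolynomialMap_param : IsPolynomialMap param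
  chart_param : ∀ x a, chart (param x a) = Pi.single a 1
  isotropic : ∀ x a b, B (param x a) (param x b) = 0
  coord : (κ → W) →ₗ[ℂ] P
  coord_param : ∀ x, coord (param x) = x
  param_coord : ∀ v, (∀ a, chart (v a) = Pi.single a 1) → (∀ a b, B (v a) (v b) = 0) →
    param (coord v) = v

namespace IsotropicCell

variable {B : W →ₗ[ℂ] W →ₗ[ℂ] ℂ}

/-- The big cell of a form given in normal form. -/
noncomputable def ofNormalForm [FiniteDimensional ℂ T] (hβ : β.IsAlt) (hs : s = 0 ∨ β = 0)
    (Ψ : NormalFormSpace m s T ≃ₗ[ℂ] W) (hB : ∀ x y, B (Ψ x) (Ψ y) = normalForm β x y) :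
    IsotropicCell B (Fin m ⊕ Fin s) (CellParam m s T) where
  chart := LinearMap.fst ℂ _ _ ∘ₗ Ψ.symm.toLinearMap
  param x a := Ψ (cellVector β x a)
  isPolynomialMap_param :=
    .pi fun a => .comp (.linear Ψ.toLinearMap) (isPolynomialMap_cellVector β a)
  chart_param x a := congr_arg Prod.fst (Ψ.symm_apply_apply _)
  isotropic x a b := (hB _ _).trans (normalForm_cellVector hβ hs x a b)
  coord := cellCoord ∘ₗ Ψ.symm.toLinearMap.compLeft (Fin m ⊕ Fin s)
  coord_param x := by
    refine Eq.trans (congr_arg cellCoord (funext fun a => ?_)) (cellCoord_cellVector hβ x)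
    exact Ψ.symm_apply_apply _
  param_coord v hv hvB := funext fun a => by
    have := cellVector_cellCoord (β := β) (v := fun a => Ψ.symm (v a)) hv fun a b => by
      rw [← hB, Ψ.apply_symm_apply, Ψ.apply_symm_apply, hvB]
    exact (Ψ.eq_symm_apply.1 (congr_fun this a) :)

/-- The same cell with its tuples indexed by another type. -/
def reindex {κ κ' : Type*} [DecidableEq κ] [DecidableEq κ'] {P : Type*} [AddCommGroup P]
    [Module ℂ P] (c : IsotropicCell B κ P) (e : κ' ≃ κ) : IsotropicCell B κ' P where
  chart := funLeft ℂ ℂ e ∘ₗ c.chart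
  param x a := c.param x (e a)
  isPolynomialMap_param := .comp (.linear (funLeft ℂ W e)) c.isPolynomialMap_param
  chart_param x a := by
    ext b
    simp [funLeft_apply, c.chart_param, Pi.single_apply]
  isotropic x a b := c.isotropic x _ _
  coord := c.coord ∘ₗ funLeft ℂ W e.symm
  coord_param x := by
    refine Eq.trans (congr_arg c.coord (funext fun a => ?_)) (c.coord_param x)
    simp [funLeft_apply]
  param_coord v hv hvB := by
    have chart_eq (a : κ) : c.chart (v (e.symm a)) = Pi.single a 1 := by
      ext b
      simpa [funLeft_apply, Pi.single_apply, Equiv.symm_apply_eq, eq_comm] using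
        congr_fun (hv (e.symm a)) (e.symm b)
    funext a
    have := c.param_coord (v ∘ e.symm) chart_eq fun a b => hvB _ _
    simpa using! congr_fun this (e a)

end IsotropicCell

end Cell

/-! ### The dimension of the isotropic Grassmannian -/

section Dimension

variable {W : Type*} [AddCommGroup W] [Module ℂ W] {B : W →ₗ[ℂ] W →ₗ[ℂ] ℂ} {k : ℕ}
  {P : Type*} [AddCommGroup P] [Module ℂ P]

/-- The isotropic subspaces in the domain of the chart of the Grassmannian defined by `p`. -/
def isotropicChartDomain (B : W →ₗ[ℂ] W →ₗ[ℂ] ℂ) (p : W →ₗ[ℂ] Fin k → ℂ) :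
    Set (IsotropicGrass B k) :=
  Subtype.val ⁻¹' chartDomain p

/-- The coordinates of an isotropic subspace in the chart defined by `p`. -/
noncomputable def isotropicChart (p : W →ₗ[ℂ] Fin k → ℂ) (F : isotropicChartDomain B p) :
    ZariskiSpace (Fin k → W) :=
  (normalizedFrame p ⟨F.1.1, F.2⟩).vectors

lemma isOpen_isotropicChartDomain [FiniteDimensional ℂ W] (p : W →ₗ[ℂ] Fin k → ℂ) :
    IsOpen (isotropicChartDomain B p) :=
  (isOpen_chartDomain p).preimage continuous_subtype_val

lemma isInducing_isotropicChart [FiniteDimensional ℂ W] (p : W →ₗ[ℂ] Fin k → ℂ) :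
    IsInducing (isotropicChart (B := B) p) := by
  have : IsInducing fun F : isotropicChartDomain B p => (⟨F.1.1, F.2⟩ : chartDomain p) :=
    IsInducing.subtypeVal.of_comp_iff.1 <| IsInducing.comp (f := Subtype.val)
      (g := (Subtype.val : IsotropicGrass B k → Grass W k)) .subtypeVal .subtypeVal
  exact (Frame.isInducing_vectors.comp isInducing_normalizedFrame).comp this

namespace IsotropicCell

variable (c : IsotropicCell B (Fin k) P)

lemma det_frameMatrix_param_ne_zero (x : P) : (frameMatrix c.chart (c.param x)).det ≠ 0 := by
  have : frameMatrix c.chart (c.param x) = 1 := by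
    ext a b
    rw [Matrix.one_eq_pi_single]
    exact congr_fun (c.chart_param x a) b
  rw [this, Matrix.det_one]
  exact one_ne_zero

/-- The isotropic frame with parameter `x`. -/
def frame (x : ZariskiSpace P) : Frame W k :=
  ⟨c.param x, linearIndependent_of_det_frameMatrix_ne_zero (c.det_frameMatrix_param_ne_zero x)⟩

/-- The isotropic subspace with parameter `x`. -/
def point (x : ZariskiSpace P) : IsotropicGrass B k :=
  ⟨(c.frame x).span, Frame.span_le_perp_iff.2 (c.isotropic x)⟩

lemma point_mem_isotropicChartDomain (x : ZariskiSpace P) :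
    c.point x ∈ isotropicChartDomain B c.chart :=
  span_mem_chartDomain_iff.2 (c.det_frameMatrix_param_ne_zero x)

variable [FiniteDimensional ℂ W]

lemma continuous_point : Continuous c.point :=
  have continuous_frame : Continuous c.frame :=
    Frame.isInducing_vectors.continuous_iff.2 c.isPolynomialMap_param.continuous
  (Frame.isQuotientMap_span.continuous.comp continuous_frame).subtype_mk _

lemma range_point : Set.range c.point = isotropicChartDomain B c.chart := by
  refine (Set.range_subset_iff.2 c.point_mem_isotropicChartDomain).antisymm fun F hF => ?_
  let v := normalizedFrame c.chart ⟨F.1, hF⟩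
  have span_v : v.span = F.1 := span_normalizedFrame
  have param_coord : c.param (c.coord v.1) = v.1 :=
    c.param_coord v.1 map_normalizedFrame (Frame.span_le_perp_iff.1 (span_v ▸ F.2))
  exact ⟨c.coord v.1, Subtype.ext ((congr_arg Frame.span (Subtype.ext param_coord)).trans span_v)⟩

lemma isInducing_point : IsInducing c.point := by
  let point' : ZariskiSpace P → isotropicChartDomain B c.chart :=
    Set.codRestrict c.point _ c.point_mem_isotropicChartDomain
  let coord (F : isotropicChartDomain B c.chart) : ZariskiSpace P :=
    c.coord (isotropicChart c.chart F)
  have coord_comp_point' : coord ∘ point' = id := funext fun x =>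
    (congr_arg c.coord (normalizedFrame_eq (c.frame x).mem_span (c.chart_param x))).trans
      (c.coord_param x)
  have : IsInducing point' := .of_comp (c.continuous_point.codRestrict _)
    ((IsPolynomialMap.linear c.coord).continuous.comp (isInducing_isotropicChart _).continuous)
    (coord_comp_point' ▸ .id)
  exact IsInducing.subtypeVal.comp this

variable [FiniteDimensional ℂ P]

lemma topologicalKrullDim_isotropicChartDomain_le [IrreducibleSpace (IsotropicGrass B k)]
    (c : IsotropicCell B (Fin k) P) (p : W →ₗ[ℂ] Fin k → ℂ) :
    topologicalKrullDim (isotropicChartDomain B p) ≤ finrank ℂ P := by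
  let f (x : {x : P // (frameMatrix p (c.param x)).det ≠ 0}) : isotropicChartDomain B p :=
    ⟨c.point x.1, span_mem_chartDomain_iff.2 x.2⟩
  have range_f : Set.range f = Subtype.val ⁻¹' isotropicChartDomain B c.chart := by
    refine Set.Subset.antisymm ?_ ?_
    · rintro _ ⟨x, rfl⟩
      exact c.point_mem_isotropicChartDomain x.1
    rintro ⟨F, hF⟩ hFc
    obtain ⟨x, rfl⟩ := c.range_point.ge hFc
    exact ⟨⟨x, span_mem_chartDomain_iff.1 hF⟩, rfl⟩
  have dense_c : Dense (isotropicChartDomain B c.chart) :=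
    (isOpen_isotropicChartDomain _).dense ⟨_, c.point_mem_isotropicChartDomain (0 : P)⟩
  have dense_f : DenseRange f := by
    rw [DenseRange, range_f]
    exact dense_c.preimage (isOpen_isotropicChartDomain p).isOpenMap_subtype_val
  exact topologicalKrullDim_le_of_rational_parametrization (isInducing_isotropicChart p)
    (c.isPolynomialMap_param.comp_mem (det_frameMatrix_mem_coordinateRing p))
    (.comp (isPolynomialMap_cramerFrame p) c.isPolynomialMap_param) dense_f
    fun x => normalizedFrame_eq_inv_smul_cramerFrame (v := c.frame x.1) rfl

lemma topologicalKrullDim_isotropicGrass_eq_finrank [IrreducibleSpace (IsotropicGrass B k)]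
    (c : IsotropicCell B (Fin k) P) :
    topologicalKrullDim (IsotropicGrass B k) = finrank ℂ P := by
  refine le_antisymm (topologicalKrullDim_le_of_forall_exists_isOpen fun F => ?_)
    (finrank_le_topologicalKrullDim_zariskiSpace.trans c.isInducing_point.topologicalKrullDim_le)
  obtain ⟨p, hp⟩ := exists_mem_chartDomain F.1
  exact ⟨isotropicChartDomain B p, isOpen_isotropicChartDomain p, hp,
    c.topologicalKrullDim_isotropicChartDomain_le p⟩

end IsotropicCell

lemma finrank_cellParam (m s n : ℕ) :
    finrank ℂ (CellParam m s (Fin n → ℂ)) = (m + 1).choose 2 + (m + s) * n := by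
  simp [CellParam, Sym2.card, finrank_pi_fintype]

lemma choose_two_add_choose_two_add_eq (m s n : ℕ) :
    (m + 1).choose 2 + (m + s) * n + (m + s).choose 2 = (m + s) * (m + n) + s.choose 2 := by
  rw [← Nat.cast_inj (R := ℚ)]
  push_cast [Nat.cast_choose_two]
  ring

end Dimension

/-- For a d-dimensional complex vector space W with a (possibly degenerate)
skew-symmetric bilinear form of rank 2r, and 0 ≤ k ≤ d − r, the variety of k-dimensional
isotropic subspaces of W is an irreducible projective (i.e. closed in the Grassmannian)
variety of dimension k(d−k) − k(k−1)/2 + (k−r)(k−r−1)/2 (last term zero when k ≤ r). -/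
theorem stmt0 (W : Type*) [AddCommGroup W] [Module ℂ W] [FiniteDimensional ℂ W]
    (B : W →ₗ[ℂ] W →ₗ[ℂ] ℂ) (hskew : ∀ v w : W, B w v = - B v w)
    (d r k : ℕ) (hd : finrank ℂ W = d)
    (hrank : finrank ℂ (W ⧸ perp B ⊤) = 2 * r)
    (hk : k ≤ d - r) :
    IsClosed {F : Grass W k | F.1 ≤ perp B F.1} ∧
    IrreducibleSpace {F : Grass W k // F.1 ≤ perp B F.1} ∧
    topologicalKrullDim {F : Grass W k // F.1 ≤ perp B F.1} =
      ((k * (d - k) + (k - r) * (k - r - 1) / 2 - k * (k - 1) / 2 : ℕ) : WithBot ℕ∞) := by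
  have hB : B.IsAlt := fun v => self_eq_neg.1 (hskew v v)
  obtain ⟨M, -, hM⟩ := exists_le_and_perp_eq_self hB (bot_le : ⊥ ≤ perp B ⊥)
  have finrank_M := two_mul_finrank_of_perp_eq_self hB hM
  have finrank_W := (perp B ⊤).finrank_quotient_add_finrank
  have : IrreducibleSpace (IsotropicGrass B k) := irreducibleSpace_isotropicGrass hB hM (by omega)
  obtain ⟨m, s, n, rfl, hm, hs, rfl⟩ : ∃ m s n, k = m + s ∧ m ≤ r ∧ (s = 0 ∨ m = r) ∧
      d = 2 * m + s + n := ⟨min k r, k - r, d - 2 * min k r - (k - r), by omega⟩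
  obtain ⟨Ψ, β, hβ, hβs, hΨ⟩ := exists_normalForm hB hd (by omega) (by omega)
  let c := (IsotropicCell.ofNormalForm hβ hβs Ψ hΨ).reindex finSumFinEquiv.symm
  refine ⟨isClosed_setOf_le_perp B _, this,
    c.topologicalKrullDim_isotropicGrass_eq_finrank.trans ?_⟩
  have count := choose_two_add_choose_two_add_eq m s n
  rw [finrank_cellParam, ← Nat.choose_two_right, ← Nat.choose_two_right,
    show 2 * m + s + n - (m + s) = m + n by omega, show m + s - r = s by omega, ← count,
    Nat.add_sub_cancel]
end

section
/- Let V be a complex vector space, 0 ⊆ U ⊆ W ⊆ V subspaces, and x a nilpotent endomorphism of V with x(U) ⊆ U and x(W) ⊆ W. If μ is the Jordan type of the induced map on W/U, then for all i ≥ 1 the length of the i-th column of μ satisfies μ_i^t = dim(x^i(W) ∩ U) + dim(ker(x^i) ∩ W) − dim(x^{i−1}(W) ∩ U) − dim(ker(x^{i−1}) ∩ W). -/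
open Module Submodule LinearMap

/-!
The kernel of the map induced on `W / (W ⊓ U)` by `x ^ i` is the image of `P = W ⊓ (x ^ i)⁻¹ U`.
Rank-nullity for `P → W / (W ⊓ U)` gives `dim P = dim ker + dim (W ⊓ U)`, and for `x ^ i` on
`P` it gives `dim P = dim ((x ^ i) W ⊓ U) + dim (ker (x ^ i) ⊓ W)`. Equating the two and subtracting
consecutive values of `i` cancels `dim (W ⊓ U)`.
-/

theorem finrank_comap_subtype {R M : Type*} [Semiring R] [AddCommMonoid M] [Module R M]
    (S T : Submodule R M) :
    finrank R (T.comap S.subtype) = finrank R ↥(S ⊓ T) := by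
  rw [← finrank_map_subtype_eq, map_comap_subtype]

section DivisionRing

variable {K M N : Type*} [DivisionRing K] [AddCommGroup M] [Module K M]
  [AddCommGroup N] [Module K N]

theorem finrank_map_add_finrank_ker_inf (f : M →ₗ[K] N) (S : Submodule K M)
    [FiniteDimensional K S] :
    finrank K (S.map f) + finrank K ↥(ker f ⊓ S) = finrank K S := by
  have rank_nullity := (f.domRestrict S).finrank_range_add_finrank_ker
  rwa [range_domRestrict, ker_domRestrict, finrank_comap_subtype, inf_comm] at rank_nullity

theorem finrank_comap_eq_finrank_range_inf_add_finrank_ker [FiniteDimensional K M] (f : M →ₗ[K] N)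
    (q : Submodule K N) :
    finrank K (q.comap f) = finrank K ↥(range f ⊓ q) + finrank K (ker f) := by
  have ker_le : ker f ≤ q.comap f := ker_le_comap f
  rw [← finrank_map_add_finrank_ker_inf f, map_comap_eq, inf_eq_left.mpr ker_le]

theorem finrank_ker_mapQ_add_finrank [FiniteDimensional K M] (p : Submodule K M)
    (q : Submodule K N) (f : M →ₗ[K] N) (h : p ≤ q.comap f) :
    finrank K (ker (p.mapQ q f h)) + finrank K p =
      finrank K ↥(range f ⊓ q) + finrank K (ker f) := by
  rw [← finrank_comap_eq_finrank_range_inf_add_finrank_ker, ker_mapQ,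
    ← finrank_map_add_finrank_ker_inf p.mkQ (q.comap f), ker_mkQ, inf_eq_left.mpr h]

theorem finrank_ker_mapQ_restrict_add_finrank_inf {U W : Submodule K M} {U' W' : Submodule K N}
    [FiniteDimensional K W] (f : M →ₗ[K] N) (hW : ∀ v ∈ W, f v ∈ W')
    (hU : U.comap W.subtype ≤ (U'.comap W'.subtype).comap (f.restrict hW)) :
    finrank K (ker ((U.comap W.subtype).mapQ (U'.comap W'.subtype) (f.restrict hW) hU)) +
        finrank K ↥(W ⊓ U) =
      finrank K ↥(W.map f ⊓ U') + finrank K ↥(ker f ⊓ W) := by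
  have map_le : W.map f ≤ W' := map_le_iff_le_comap.mpr hW
  have range_eq : range (f.restrict hW) ⊓ U'.comap W'.subtype =
      (W.map f ⊓ U').comap W'.subtype := by
    rw [range_restrict, comap_inf]
  rw [← finrank_comap_subtype W U, finrank_ker_mapQ_add_finrank, range_eq, ker_restrict,
    finrank_comap_subtype, finrank_comap_subtype, ← inf_assoc, inf_eq_right.mpr map_le,
    inf_comm W]

theorem finrank_ker_mapQ_restrict_pow_add_finrank_inf {U W : Submodule K M}
    [FiniteDimensional K W] (x : End K M) (hW : ∀ v ∈ W, x v ∈ W)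
    (hU : U.comap W.subtype ≤ (U.comap W.subtype).comap (x.restrict hW)) (k : ℕ) :
    finrank K (ker ((U.comap W.subtype).mapQ (U.comap W.subtype) (x.restrict hW) hU ^ k)) +
        finrank K ↥(W ⊓ U) =
      finrank K ↥(W.map (x ^ k) ⊓ U) + finrank K ↥(ker (x ^ k) ⊓ W) := by
  have hWk : ∀ v ∈ W, (x ^ k) v ∈ W := End.pow_apply_mem_of_forall_mem k hW
  have restrict_pow : x.restrict hW ^ k = (x ^ k).restrict hWk := End.pow_restrict k hW
  have hUk : U.comap W.subtype ≤ (U.comap W.subtype).comap ((x ^ k).restrict hWk) :=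
    restrict_pow ▸ le_comap_pow_of_le_comap _ hU k
  have induced_pow : (U.comap W.subtype).mapQ (U.comap W.subtype) (x.restrict hW) hU ^ k =
      (U.comap W.subtype).mapQ (U.comap W.subtype) ((x ^ k).restrict hWk) hUk := by
    rw [← mapQ_pow _ hU]
    congr
  rw [induced_pow, finrank_ker_mapQ_restrict_add_finrank_inf]

end DivisionRing

theorem stmt1_general {K V : Type*} [DivisionRing K] [AddCommGroup V] [Module K V]
    {U W : Submodule K V} [FiniteDimensional K W] (x : End K V) (hW : ∀ v ∈ W, x v ∈ W)
    (hU : U.comap W.subtype ≤ (U.comap W.subtype).comap (x.restrict hW)) (i : ℕ) :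
    finrank K (ker ((U.comap W.subtype).mapQ (U.comap W.subtype) (x.restrict hW) hU ^ (i + 1))) -
        finrank K (ker ((U.comap W.subtype).mapQ (U.comap W.subtype) (x.restrict hW) hU ^ i)) =
      finrank K ↥(W.map (x ^ (i + 1)) ⊓ U) + finrank K ↥(ker (x ^ (i + 1)) ⊓ W) -
        finrank K ↥(W.map (x ^ i) ⊓ U) - finrank K ↥(ker (x ^ i) ⊓ W) := by
  have dim_succ := finrank_ker_mapQ_restrict_pow_add_finrank_inf x hW hU (i + 1)
  have dim_i := finrank_ker_mapQ_restrict_pow_add_finrank_inf x hW hU i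
  omega

/-- column lengths of the Jordan type of the nilpotent map induced on a
subquotient W/U. Here the i-th column length of the Jordan type of a nilpotent y is
dim ker(y^i) − dim ker(y^{i−1}). -/
theorem stmt1 (V : Type*) [AddCommGroup V] [Module ℂ V] [FiniteDimensional ℂ V]
    (U W : Submodule ℂ V) (hUW : U ≤ W)
    (x : V →ₗ[ℂ] V) (hnil : IsNilpotent x)
    (hU : ∀ v ∈ U, x v ∈ U) (hW : ∀ v ∈ W, x v ∈ W)
    (i : ℕ) (hi : 1 ≤ i) :
    finrank ℂ (LinearMap.ker ((subQuotMap x W U hW hU) ^ i)) -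
        finrank ℂ (LinearMap.ker ((subQuotMap x W U hW hU) ^ (i - 1))) =
      finrank ℂ ↥(W.map (x ^ i) ⊓ U) + finrank ℂ ↥(LinearMap.ker (x ^ i) ⊓ W) -
        finrank ℂ ↥(W.map (x ^ (i - 1)) ⊓ U) - finrank ℂ ↥(LinearMap.ker (x ^ (i - 1)) ⊓ W) := by
  obtain ⟨j, rfl⟩ := Nat.exists_eq_add_of_le' hi
  exact stmt1_general x hW (fun v hv ↦ hU v hv) j
end

section
/- Let x be a nilpotent endomorphism of a finite-dimensional vector space V and F ⊆ ker(x) a subspace. Set a_j = dim(F ∩ Im(x^j)) for j ≥ 0. Then the Jordan type of the induced map on V/F is obtained from the Jordan type of x by removing (a_{j−1} − a_j) boxes from the bottom of column j for every j ≥ 1; equivalently, the j-th column length of J(x|_{V/F}) equals that of J(x) minus (a_{j−1} − a_j}. Moreover these removed boxes form a vertical strip: no two are in the same row. -/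
open Module Submodule LinearMap

/-!
If `F` is `f`-invariant, the kernel of the map induced by `f ^ n` on `V ⧸ F` is the image of the
preimage of `F` under `f ^ n`, so its dimension is `dim ker (f ^ n) + a n - dim F`, where
`a n = dim (F ⊓ range (f ^ n))`. Taking differences in `n` gives the change of the column lengths.

The `(n + 1)`-st column of `f` has length `dim (ker f ⊓ range (f ^ n))`. When `F ≤ ker f`, the
drop of `F ⊓ range (f ^ n)` from `n` to `n + 1` is at most that of `ker f ⊓ range (f ^ n)`, so no
column loses more boxes than it exceeds the next one by, which is the vertical strip condition.
-/

section JordanColumns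

variable {K V W : Type*} [DivisionRing K] [AddCommGroup V] [Module K V]
  [AddCommGroup W] [Module K W]

theorem finrank_comap_eq_finrank_ker_add_finrank_inf_range (f : V →ₗ[K] W) (U : Submodule K W)
    [FiniteDimensional K (U.comap f)] :
    finrank K (U.comap f) = finrank K (ker f) + finrank K ↥(U ⊓ range f) := by
  have hrange : range (f.domRestrict (U.comap f)) = U ⊓ range f := by
    rw [range_domRestrict, map_comap_eq, inf_comm]
  have hker : finrank K (ker (f.domRestrict (U.comap f))) = finrank K (ker f) := by
    rw [ker_domRestrict]
    exact (comapSubtypeEquivOfLe (ker_le_comap f)).finrank_eq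
  rw [← finrank_range_add_finrank_ker (f.domRestrict (U.comap f)), hrange, hker, add_comm]

theorem finrank_inf_add_finrank_inf_le {A B R S : Submodule K V} [FiniteDimensional K ↥(B ⊓ R)]
    (hAB : A ≤ B) (hSR : S ≤ R) :
    finrank K ↥(A ⊓ R) + finrank K ↥(B ⊓ S) ≤ finrank K ↥(B ⊓ R) + finrank K ↥(A ⊓ S) := by
  have hAR : A ⊓ R ≤ B ⊓ R := inf_le_inf_right R hAB
  have hBS : B ⊓ S ≤ B ⊓ R := inf_le_inf_left B hSR
  have := finiteDimensional_of_le hAR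
  have := finiteDimensional_of_le hBS
  have hinf : (A ⊓ R) ⊓ (B ⊓ S) = A ⊓ S := by
    rw [inf_inf_inf_comm, inf_eq_left.mpr hAB, inf_eq_right.mpr hSR]
  rw [← finrank_sup_add_finrank_inf_eq, hinf]
  exact Nat.add_le_add_right (finrank_mono (sup_le hAR hBS)) _

instance finiteDimensional_ker_pow (f : End K V) [FiniteDimensional K (ker f)] (n : ℕ) :
    FiniteDimensional K (ker (f ^ n)) := by
  induction n with
  | zero => rw [pow_zero, End.one_eq_id, ker_id]; infer_instance
  | succ n ih => rw [pow_succ', End.mul_eq_comp, ker_comp]; infer_instance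

theorem finrank_ker_pow_succ (f : End K V) [FiniteDimensional K (ker f)] (n : ℕ) :
    finrank K (ker (f ^ (n + 1))) =
      finrank K (ker (f ^ n)) + finrank K ↥(ker f ⊓ range (f ^ n)) := by
  rw [pow_succ', End.mul_eq_comp, ker_comp, finrank_comap_eq_finrank_ker_add_finrank_inf_range]

theorem range_pow_succ_le (f : End K V) (n : ℕ) : range (f ^ (n + 1)) ≤ range (f ^ n) :=
  f.iterateRange.monotone n.le_succ

/-- The length of the `j`-th column of the Jordan type of `f`, for `j ≥ 1`. Columns are numbered
from `1`, and at `j = 0` the value is `0`. For general `f` it only sees the vectors killed by some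
power of `f`, that is, the Jordan blocks for the eigenvalue `0`. -/
noncomputable def jordanColumn (f : End K V) (j : ℕ) : ℕ :=
  finrank K (ker (f ^ j)) - finrank K (ker (f ^ (j - 1)))

theorem jordanColumn_succ (f : End K V) [FiniteDimensional K (ker f)] (n : ℕ) :
    jordanColumn f (n + 1) = finrank K ↥(ker f ⊓ range (f ^ n)) := by
  rw [jordanColumn, Nat.add_sub_cancel, finrank_ker_pow_succ, Nat.add_sub_cancel_left]

theorem finrank_ker_pow_add_jordanColumn (f : End K V) [FiniteDimensional K (ker f)] (n : ℕ) :
    finrank K (ker (f ^ n)) + jordanColumn f (n + 1) = finrank K (ker (f ^ (n + 1))) := by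
  rw [jordanColumn_succ, finrank_ker_pow_succ]

section Quotient

variable {f : End K V} {F : Submodule K V} (hinv : F ≤ F.comap f)

theorem ker_mapQ_pow (n : ℕ) : ker (F.mapQ F f hinv ^ n) = (F.comap (f ^ n)).map F.mkQ := by
  rw [← mapQ_pow, ker_mapQ]

variable [FiniteDimensional K F] [FiniteDimensional K (ker f)]

instance finiteDimensional_ker_mapQ : FiniteDimensional K (ker (F.mapQ F f hinv)) := by
  rw [ker_mapQ]
  infer_instance

theorem finrank_add_finrank_ker_mapQ_pow (n : ℕ) :
    finrank K F + finrank K (ker (F.mapQ F f hinv ^ n)) =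
      finrank K (ker (f ^ n)) + finrank K ↥(F ⊓ range (f ^ n)) := by
  have hcomap : (ker (F.mapQ F f hinv ^ n)).comap F.mkQ = F.comap (f ^ n) := by
    rw [ker_mapQ_pow, comap_map_mkQ, sup_eq_right.mpr (le_comap_pow_of_le_comap F hinv n)]
  have : FiniteDimensional K ((ker (F.mapQ F f hinv ^ n)).comap F.mkQ) :=
    hcomap ▸ inferInstance
  have hmkQ :=
    finrank_comap_eq_finrank_ker_add_finrank_inf_range F.mkQ (ker (F.mapQ F f hinv ^ n))
  rw [hcomap, ker_mkQ, range_mkQ, inf_top_eq] at hmkQ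
  rw [← hmkQ, finrank_comap_eq_finrank_ker_add_finrank_inf_range]

theorem jordanColumn_mapQ_succ_add (n : ℕ) :
    jordanColumn (F.mapQ F f hinv) (n + 1) + finrank K ↥(F ⊓ range (f ^ n)) =
      jordanColumn f (n + 1) + finrank K ↥(F ⊓ range (f ^ (n + 1))) := by
  have hn := finrank_add_finrank_ker_mapQ_pow hinv n
  have hsucc := finrank_add_finrank_ker_mapQ_pow hinv (n + 1)
  rw [← finrank_ker_pow_add_jordanColumn, ← finrank_ker_pow_add_jordanColumn f] at hsucc
  omega

theorem jordanColumn_mapQ_succ (n : ℕ) :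
    jordanColumn (F.mapQ F f hinv) (n + 1) = jordanColumn f (n + 1) -
      (finrank K ↥(F ⊓ range (f ^ n)) - finrank K ↥(F ⊓ range (f ^ (n + 1)))) := by
  have hdrop : finrank K ↥(F ⊓ range (f ^ (n + 1))) ≤ finrank K ↥(F ⊓ range (f ^ n)) :=
    finrank_mono (inf_le_inf_left F (range_pow_succ_le f n))
  have hadd := jordanColumn_mapQ_succ_add hinv n
  omega

end Quotient

theorem jordanColumn_add_two_le_mapQ {f : End K V} {F : Submodule K V} (hF : F ≤ ker f)
    (hinv : F ≤ F.comap f) [FiniteDimensional K (ker f)] (n : ℕ) :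
    jordanColumn f (n + 2) ≤ jordanColumn (F.mapQ F f hinv) (n + 1) := by
  have := finiteDimensional_of_le hF
  have hadd := jordanColumn_mapQ_succ_add hinv n
  have hdrop : finrank K ↥(F ⊓ range (f ^ n)) + jordanColumn f (n + 2) ≤
      jordanColumn f (n + 1) + finrank K ↥(F ⊓ range (f ^ (n + 1))) := by
    rw [jordanColumn_succ, jordanColumn_succ]
    exact finrank_inf_add_finrank_inf_le hF (range_pow_succ_le f n)
  omega

theorem stmt2_general (f : End K V) [FiniteDimensional K (ker f)]
    (F : Submodule K V) (hF : F ≤ ker f)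
    (a : ℕ → ℕ) (ha : ∀ j, a j = finrank K ↥(F ⊓ range (f ^ j)))
    (hinv : F ≤ F.comap f) :
    (∀ j : ℕ, 1 ≤ j →
      jordanColumn (F.mapQ F f hinv) j = jordanColumn f j - (a (j - 1) - a j)) ∧
    (∀ j : ℕ, 1 ≤ j → jordanColumn f (j + 1) ≤ jordanColumn (F.mapQ F f hinv) j) := by
  have := finiteDimensional_of_le hF
  constructor
  · rintro (_ | n) hj
    · contradiction
    · rw [ha, ha]
      exact jordanColumn_mapQ_succ hinv n
  · rintro (_ | n) hj
    · contradiction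
    · exact jordanColumn_add_two_le_mapQ hF hinv n

end JordanColumns

/-- for a nilpotent x and F ⊆ ker x, with a_j = dim(F ∩ Im(x^j)), the Jordan
type of the induced map on V/F is obtained from that of x by removing a_{j−1} − a_j boxes
from the bottom of column j, and the removed boxes form a vertical strip. Column lengths
of the Jordan type of a nilpotent y are dim ker(y^j) − dim ker(y^{j−1}). -/
theorem stmt2 (V : Type*) [AddCommGroup V] [Module ℂ V] [FiniteDimensional ℂ V]
    (x : V →ₗ[ℂ] V) (hnil : IsNilpotent x)
    (F : Submodule ℂ V) (hF : F ≤ LinearMap.ker x)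
    (a : ℕ → ℕ) (ha : ∀ j, a j = finrank ℂ ↥(F ⊓ LinearMap.range (x ^ j)))
    (hinv : F ≤ F.comap x) :
    (∀ j : ℕ, 1 ≤ j →
      finrank ℂ (LinearMap.ker ((Submodule.mapQ F F x hinv) ^ j)) -
          finrank ℂ (LinearMap.ker ((Submodule.mapQ F F x hinv) ^ (j - 1))) =
        (finrank ℂ (LinearMap.ker (x ^ j)) - finrank ℂ (LinearMap.ker (x ^ (j - 1)))) -
          (a (j - 1) - a j)) ∧
    -- vertical strip: no two removed boxes in the same row
    (∀ j : ℕ, 1 ≤ j →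
      finrank ℂ (LinearMap.ker (x ^ (j + 1))) - finrank ℂ (LinearMap.ker (x ^ j)) ≤
        finrank ℂ (LinearMap.ker ((Submodule.mapQ F F x hinv) ^ j)) -
          finrank ℂ (LinearMap.ker ((Submodule.mapQ F F x hinv) ^ (j - 1)))) :=
  stmt2_general x F hF a ha hinv
end

section
/- Let V be a 2n-dimensional symplectic vector space and x a self-adjoint nilpotent endomorphism of V. If F ⊆ ker(x) is a subspace, then the Jordan type of the map induced by x on V/F equals the Jordan type of the restriction of x to F^⊥. -/
open Module Submodule LinearMap

/-!
The pairing identifies `F^⊥` with the dual of `V ⧸ F`, and adjointness says that under this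
identification the restriction of `x` to `F^⊥` is the transpose of the map induced on `V ⧸ F`.
An endomorphism of a finite-dimensional space and its transpose have kernels of the same dimension.
The same applies to every power of `x`, which is again self-adjoint.
-/

section CommRing

variable {R V W : Type*} [CommRing R] [AddCommGroup V] [Module R V] [AddCommGroup W] [Module R W]

theorem orthogonalBilin_eq_comap_dualAnnihilator (B : V →ₗ[R] W →ₗ[R] R) (F : Submodule R V) :
    F.orthogonalBilin B = F.dualAnnihilator.comap B.flip := by
  ext w
  simp only [mem_orthogonalBilin_iff, mem_comap, mem_dualAnnihilator, flip_apply]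

/-- For a perfect pairing of `V` and `W`, the isomorphism `F^⊥ ≅ (V / F)^*` sending `w` to the
functional induced by `v ↦ B v w`. -/
noncomputable def orthogonalBilinEquivDualQuot (B : V →ₗ[R] W →ₗ[R] R) [B.IsPerfPair]
    (F : Submodule R V) : F.orthogonalBilin B ≃ₗ[R] Dual R (V ⧸ F) :=
  LinearEquiv.ofEq _ _ (orthogonalBilin_eq_comap_dualAnnihilator B F) ≪≫ₗ
    B.flip.toPerfPair.ofSubmodule' F.dualAnnihilator ≪≫ₗ F.dualQuotEquivDualAnnihilator.symm

theorem orthogonalBilinEquivDualQuot_apply_mk (B : V →ₗ[R] W →ₗ[R] R) [B.IsPerfPair]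
    (F : Submodule R V) (w : F.orthogonalBilin B) (v : V) :
    orthogonalBilinEquivDualQuot B F w (Submodule.Quotient.mk v) = B v w :=
  rfl

theorem adjoint_pow {B : V →ₗ[R] W →ₗ[R] R} {f : End R V} {g : End R W}
    (hfg : ∀ v w, B (f v) w = B v (g w)) (k : ℕ) (v : V) (w : W) :
    B ((f ^ k) v) w = B v ((g ^ k) w) := by
  induction k generalizing v with
  | zero => rfl
  | succ k ih =>
    rw [pow_succ, End.mul_apply, ih, hfg, pow_succ', End.mul_apply]

variable (B : V →ₗ[R] W →ₗ[R] R) [B.IsPerfPair] {f : End R V} {g : End R W}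
  {F : Submodule R V}

theorem orthogonalBilinEquivDualQuot_restrict (hfg : ∀ v w, B (f v) w = B v (g w))
    (hf : F ≤ F.comap f) (hg : ∀ w ∈ F.orthogonalBilin B, g w ∈ F.orthogonalBilin B)
    (w : F.orthogonalBilin B) :
    orthogonalBilinEquivDualQuot B F (g.restrict hg w) =
      (F.mapQ F f hf).dualMap (orthogonalBilinEquivDualQuot B F w) := by
  refine linearMap_qext F (LinearMap.ext fun v ↦ ?_)
  calc
    orthogonalBilinEquivDualQuot B F (g.restrict hg w) (Submodule.Quotient.mk v)
    _ = B v (g w) := orthogonalBilinEquivDualQuot_apply_mk B F (g.restrict hg w) v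
    _ = B (f v) w := (hfg v w).symm
    _ = orthogonalBilinEquivDualQuot B F w (F.mapQ F f hf (Submodule.Quotient.mk v)) :=
      (orthogonalBilinEquivDualQuot_apply_mk B F w (f v)).symm

theorem ker_restrict_orthogonalBilin (hfg : ∀ v w, B (f v) w = B v (g w))
    (hf : F ≤ F.comap f) (hg : ∀ w ∈ F.orthogonalBilin B, g w ∈ F.orthogonalBilin B) :
    ker (g.restrict hg) =
      (ker (F.mapQ F f hf).dualMap).comap (orthogonalBilinEquivDualQuot B F).toLinearMap := by
  ext w
  rw [mem_comap, mem_ker, mem_ker, LinearEquiv.coe_coe,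
    ← orthogonalBilinEquivDualQuot_restrict B hfg hf hg, LinearEquiv.map_eq_zero_iff]

end CommRing

section Field

variable {K V W : Type*} [Field K] [AddCommGroup V] [Module K V] [AddCommGroup W] [Module K W]

theorem finrank_ker_dualMap_add_finrank [FiniteDimensional K V] [FiniteDimensional K W]
    (f : V →ₗ[K] W) :
    finrank K (ker f.dualMap) + finrank K V = finrank K (ker f) + finrank K W := by
  have rank_nullity := f.finrank_range_add_finrank_ker
  have annihilator := Subspace.finrank_add_finrank_dualAnnihilator_eq (range f)
  rw [ker_dualMap_eq_dualAnnihilator_range]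
  lia

theorem isPerfPair_of_separatingLeft [FiniteDimensional K V] [FiniteDimensional K W]
    (hVW : finrank K V = finrank K W) {B : V →ₗ[K] W →ₗ[K] K} (hB : B.SeparatingLeft) :
    B.IsPerfPair :=
  have injective : Function.Injective B := ker_eq_bot.mp (separatingLeft_iff_ker_eq_bot.mp hB)
  have finrank_eq : finrank K V = finrank K (Dual K W) := hVW.trans Subspace.dual_finrank_eq.symm
  .of_bijective B
    ⟨injective, (injective_iff_surjective_of_finrank_eq_finrank finrank_eq).mp injective⟩

theorem finrank_ker_mapQ_eq_finrank_ker_restrict_orthogonalBilin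
    (B : V →ₗ[K] W →ₗ[K] K) [B.IsPerfPair] {f : End K V} {g : End K W} {F : Submodule K V}
    (hfg : ∀ v w, B (f v) w = B v (g w))
    (hf : F ≤ F.comap f) (hg : ∀ w ∈ F.orthogonalBilin B, g w ∈ F.orthogonalBilin B) :
    finrank K (ker (F.mapQ F f hf)) = finrank K (ker (g.restrict hg)) := by
  have : IsReflexive K V := .of_isPerfPair B
  calc
    finrank K (ker (F.mapQ F f hf)) = finrank K (ker (F.mapQ F f hf).dualMap) :=
      (Nat.add_right_cancel (finrank_ker_dualMap_add_finrank _)).symm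
    _ = finrank K (ker (g.restrict hg)) := by
      rw [ker_restrict_orthogonalBilin B hfg hf hg]
      exact ((orthogonalBilinEquivDualQuot B F).ofSubmodule' _).finrank_eq.symm

theorem stmt5_general (B : V →ₗ[K] W →ₗ[K] K) [B.IsPerfPair] {f : End K V} {g : End K W}
    {F : Submodule K V} (hfg : ∀ v w, B (f v) w = B v (g w))
    (hf : F ≤ F.comap f) (hg : ∀ w ∈ F.orthogonalBilin B, g w ∈ F.orthogonalBilin B) (j : ℕ) :
    finrank K (ker ((F.mapQ F f hf) ^ j)) = finrank K (ker ((g.restrict hg) ^ j)) := by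
  rw [← mapQ_pow, End.pow_restrict]
  exact finrank_ker_mapQ_eq_finrank_ker_restrict_orthogonalBilin B (adjoint_pow hfg j) _ _

end Field

/-- for a self-adjoint nilpotent x on a 2n-dimensional symplectic space and
F ⊆ ker x, the Jordan type of the map induced by x on V/F equals the Jordan type of the
restriction of x to F^⊥ (Jordan types are determined by the dimensions of the kernels of
all powers). -/
theorem stmt5 (V : Type*) [AddCommGroup V] [Module ℂ V] [FiniteDimensional ℂ V]
    (n : ℕ) (hdim : finrank ℂ V = 2 * n)
    (B : V →ₗ[ℂ] V →ₗ[ℂ] ℂ) (hskew : ∀ v w : V, B w v = - B v w)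
    (hnondeg : ∀ v : V, (∀ w : V, B v w = 0) → v = 0)
    (x : V →ₗ[ℂ] V) (hsa : ∀ v w : V, B (x v) w = B v (x w)) (hnil : IsNilpotent x)
    (F : Submodule ℂ V) (hF : F ≤ LinearMap.ker x) :
    ∀ (hinv : F ≤ F.comap x) (hperp : ∀ v ∈ perp B F, x v ∈ perp B F) (j : ℕ),
      finrank ℂ (LinearMap.ker ((Submodule.mapQ F F x hinv) ^ j)) =
        finrank ℂ (LinearMap.ker ((x.restrict hperp) ^ j)) := by
  have := isPerfPair_of_separatingLeft rfl hnondeg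
  exact stmt5_general B.flip fun v w ↦ (hsa w v).symm
end

section
/- Let V be a symplectic vector space and x a self-adjoint nilpotent endomorphism. For each j ≥ 0, the pairing ⟨⟨u,w⟩⟩_j on Im(x^j), defined by ⟨⟨u,w⟩⟩_j = ⟨z,w⟩ where z is any vector with x^j z = u, is well defined, bilinear, skew-symmetric, and nondegenerate on Im(x^j). In particular Im(x^j) is even dimensional. -/
open Module Submodule LinearMap

/-!
Put `f = x ^ j`, which is again self-adjoint. The identity `⟨z, f v⟩ = ⟨f z, v⟩` shows that `ker f`
is orthogonal to `range f`, so `⟨z, w⟩` with `w ∈ range f` depends only on `f z`. The same identity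
reads `⟨⟨f z, f v⟩⟩ = ⟨z, f v⟩ = ⟨f z, v⟩`, which transfers skew symmetry and nondegeneracy from the
form to the pairing. Finally, a skew-symmetric Gram matrix `A` of odd size satisfies
`det A = det Aᵀ = -det A`, so a nondegenerate one has even size.
-/

section SkewSymmetric

variable {R : Type*} [CommRing R] [NeZero (2 : R)]

theorem det_eq_zero_of_transpose_eq_neg [NoZeroDivisors R] {ι : Type*} [Fintype ι] [DecidableEq ι]
    {A : Matrix ι ι R} (hA : A.transpose = -A) (hι : Odd (Fintype.card ι)) : A.det = 0 := by
  have hdet : A.det = -A.det :=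
    calc
      A.det = (-A).det := by rw [← hA, Matrix.det_transpose]
      _ = -A.det := by rw [Matrix.det_neg, hι.neg_one_pow, neg_one_mul]
  have htwo : 2 * A.det = 0 := by linear_combination hdet
  exact (mul_eq_zero.mp htwo).resolve_left two_ne_zero

theorem even_finrank_of_separatingLeft_of_skew [IsDomain R] {M : Type*} [AddCommGroup M]
    [Module R M] [Module.Free R M] [Module.Finite R M] {B : M →ₗ[R] M →ₗ[R] R}
    (hB : B.SeparatingLeft) (hskew : ∀ v w, B w v = -B v w) : Even (finrank R M) := by
  let b := finBasis R M
  have htranspose : (toMatrix₂ b b B).transpose = -toMatrix₂ b b B := by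
    ext i k
    simp [toMatrix₂_apply, hskew (b i) (b k)]
  have hdet : (toMatrix₂ b b B).det ≠ 0 := (separatingLeft_iff_det_ne_zero b).mp hB
  by_contra hodd
  refine hdet (det_eq_zero_of_transpose_eq_neg htranspose ?_)
  rwa [Fintype.card_fin, ← Nat.not_even_iff_odd]

end SkewSymmetric

theorem isSelfAdjoint_pow {R M P : Type*} [CommSemiring R] [AddCommMonoid M] [Module R M]
    [AddCommMonoid P] [Module R P] {B : M →ₗ[R] M →ₗ[R] P} {x : Module.End R M}
    (hx : B.IsSelfAdjoint x) (j : ℕ) : B.IsSelfAdjoint ⇑(x ^ j) := by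
  induction j with
  | zero => exact isAdjointPair_one
  | succ j ih =>
    have hmul : IsAdjointPair B B (x ^ j * x) (x * x ^ j) := IsAdjointPair.mul ih hx
    rwa [← pow_succ, ← pow_succ'] at hmul

section RangePairing

variable {R M P : Type*} [CommRing R] [AddCommGroup M] [Module R M] [AddCommGroup P] [Module R P]
  {B : M →ₗ[R] M →ₗ[R] P} {f : Module.End R M}

theorem ker_le_ker_compl₂_subtype_range (hf : B.IsSelfAdjoint f) :
    ker f ≤ ker (B.compl₂ (range f).subtype) := by
  intro z hz
  ext ⟨_, v, rfl⟩
  calc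
    B z (f v) = B (f z) v := (hf z v).symm
    _ = 0 := by rw [mem_ker.mp hz, map_zero, LinearMap.zero_apply]

/-- The pairing `⟨⟨f z, w⟩⟩ = B z w` on the range of an endomorphism `f` that is self-adjoint for
`B`. To avoid choosing preimages, it is the descent of `B` in its first argument to
`M ⧸ ker f ≃ range f`. -/
noncomputable def rangePairing (hf : B.IsSelfAdjoint f) : range f →ₗ[R] range f →ₗ[R] P :=
  (ker f).liftQ (B.compl₂ (range f).subtype) (ker_le_ker_compl₂_subtype_range hf) ∘ₗ
    f.quotKerEquivRange.symm

theorem rangePairing_apply_left (hf : B.IsSelfAdjoint f) (z : M) (w : range f) :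
    rangePairing hf ⟨f z, mem_range_self f z⟩ w = B z w := by
  simp [rangePairing]

theorem rangePairing_skew (hf : B.IsSelfAdjoint f) (hskew : ∀ v w, B w v = -B v w)
    (u w : range f) : rangePairing hf w u = -rangePairing hf u w := by
  obtain ⟨_, z, rfl⟩ := u
  obtain ⟨_, v, rfl⟩ := w
  calc
    rangePairing hf ⟨f v, _⟩ ⟨f z, _⟩ = B v (f z) := rangePairing_apply_left hf v _
    _ = -B (f z) v := hskew _ _
    _ = -B z (f v) := by rw [hf z v]
    _ = -rangePairing hf ⟨f z, _⟩ ⟨f v, _⟩ := by rw [rangePairing_apply_left]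

theorem separatingLeft_rangePairing (hf : B.IsSelfAdjoint f) (hB : B.SeparatingLeft) :
    (rangePairing hf).SeparatingLeft := by
  rintro ⟨_, z, rfl⟩ hz
  refine Subtype.ext (hB (f z) fun v => ?_)
  calc
    B (f z) v = B z (f v) := hf z v
    _ = rangePairing hf ⟨f z, _⟩ ⟨f v, _⟩ :=
      (rangePairing_apply_left hf z ⟨f v, mem_range_self f v⟩).symm
    _ = 0 := hz _

end RangePairing

theorem stmt6_general {R M : Type*} [CommRing R] [IsDomain R] [NeZero (2 : R)] [AddCommGroup M]
    [Module R M] {B : M →ₗ[R] M →ₗ[R] R} (hskew : ∀ v w, B w v = -B v w) (hB : B.SeparatingLeft)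
    {x : Module.End R M} (hx : B.IsSelfAdjoint x) (j : ℕ) :
    ∃ Bj : range (x ^ j) →ₗ[R] range (x ^ j) →ₗ[R] R,
      (∀ (z : M) (w : range (x ^ j)), Bj ⟨(x ^ j) z, mem_range_self (x ^ j) z⟩ w = B z w) ∧
      (∀ u w, Bj w u = -Bj u w) ∧
      Bj.SeparatingLeft ∧
      (∀ [Module.Free R (range (x ^ j))] [Module.Finite R (range (x ^ j))],
        Even (finrank R (range (x ^ j)))) := by
  have hpow : B.IsSelfAdjoint ⇑(x ^ j) := isSelfAdjoint_pow hx j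
  have hBj : (rangePairing hpow).SeparatingLeft := separatingLeft_rangePairing hpow hB
  have hskewj := rangePairing_skew hpow hskew
  exact ⟨rangePairing hpow, rangePairing_apply_left hpow, hskewj, hBj,
    even_finrank_of_separatingLeft_of_skew hBj hskewj⟩

/-- for a self-adjoint nilpotent x on a symplectic space, the pairing
⟨⟨u,w⟩⟩_j on Im(x^j), given by ⟨⟨x^j z, w⟩⟩_j = ⟨z,w⟩, is well defined, bilinear,
skew-symmetric and nondegenerate; in particular Im(x^j) is even dimensional. -/
theorem stmt6 (V : Type*) [AddCommGroup V] [Module ℂ V] [FiniteDimensional ℂ V]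
    (n : ℕ) (hdim : finrank ℂ V = 2 * n)
    (B : V →ₗ[ℂ] V →ₗ[ℂ] ℂ) (hskew : ∀ v w : V, B w v = - B v w)
    (hnondeg : ∀ v : V, (∀ w : V, B v w = 0) → v = 0)
    (x : V →ₗ[ℂ] V) (hsa : ∀ v w : V, B (x v) w = B v (x w)) (hnil : IsNilpotent x)
    (j : ℕ) :
    ∃ Bj : ↥(LinearMap.range (x ^ j)) →ₗ[ℂ] ↥(LinearMap.range (x ^ j)) →ₗ[ℂ] ℂ,
      (∀ (z : V) (w : ↥(LinearMap.range (x ^ j))),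
        Bj ⟨(x ^ j) z, LinearMap.mem_range_self (x ^ j) z⟩ w = B z w) ∧
      (∀ u w : ↥(LinearMap.range (x ^ j)), Bj w u = - Bj u w) ∧
      (∀ u : ↥(LinearMap.range (x ^ j)), (∀ w, Bj u w = 0) → u = 0) ∧
      Even (finrank ℂ ↥(LinearMap.range (x ^ j))) := by
  obtain ⟨Bj, hlift, hskewj, hsep, heven⟩ := stmt6_general hskew hnondeg hsa j
  exact ⟨Bj, hlift, hskewj, hsep, heven⟩
end

section
/- Let V be a symplectic vector space, x a self-adjoint nilpotent endomorphism, and F ⊆ V any subspace. Then for all j ≥ 0, x^j(F^⊥) = (F ∩ Im(x^j))^{⊥⊥_j}, where ⊥⊥_j denotes the perpendicular inside Im(x^j) with respect to the form ⟨⟨ , ⟩⟩_j. -/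
open Module Submodule LinearMap

/-!
Adjunction turns the image of a perpendicular into the perpendicular of a preimage: if
`⟨f v, w⟩ = ⟨v, g w⟩`, then `(g (F^⊥))^⊥ = f⁻¹ (F^⊥⊥) = f⁻¹ F`, and taking perpendiculars once more
gives `g (F^⊥) = (f⁻¹ F)^⊥`. Since `⟨v, g z⟩ = ⟨f v, z⟩`, a vector `g z` is orthogonal to `f⁻¹ F` as
soon as it is orthogonal to `F ∩ Im f` for the form induced on the images.
-/

section AdjointPair

variable {R M M₁ : Type*} [CommSemiring R] [AddCommMonoid M] [Module R M]
  [AddCommMonoid M₁] [Module R M₁]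

lemma isAdjointPair_pow {B : M →ₗ[R] M →ₗ[R] R} {f g : End R M}
    (h : B.IsAdjointPair B f g) (j : ℕ) : B.IsAdjointPair B ⇑(f ^ j) ⇑(g ^ j) := by
  induction j with
  | zero => exact isAdjointPair_one
  | succ j ih =>
    rw [pow_succ f, pow_succ' g]
    exact ih.mul h

lemma orthogonalBilin_flip_map {B : M →ₗ[R] M →ₗ[R] R} {B₁ : M₁ →ₗ[R] M₁ →ₗ[R] R}
    {f : M →ₗ[R] M₁} {g : M₁ →ₗ[R] M} (h : B.IsAdjointPair B₁ f g) (S : Submodule R M₁) :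
    (S.map g).orthogonalBilin B.flip = (S.orthogonalBilin B₁.flip).comap f := by
  ext v
  simp only [mem_orthogonalBilin_iff, Submodule.mem_map, forall_exists_index, and_imp,
    forall_apply_eq_imp_iff₂, mem_comap, flip_apply, h v]

end AdjointPair

lemma nondegenerate_of_skew {R M : Type*} [CommRing R] [AddCommGroup M] [Module R M]
    {B : M →ₗ[R] M →ₗ[R] R} (hskew : ∀ v w, B w v = -B v w) (hB : B.SeparatingLeft) :
    B.Nondegenerate := by
  have isRefl : B.IsRefl := fun v w hvw => by rw [hskew v w, hvw, neg_zero]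
  exact isRefl.nondegenerate_iff_separatingLeft.mpr hB

section FiniteDimensional

variable {K V V₁ : Type*} [Field K] [AddCommGroup V] [Module K V] [FiniteDimensional K V]
  [AddCommGroup V₁] [Module K V₁]

lemma orthogonalBilin_orthogonalBilin_flip {B : V →ₗ[K] V₁ →ₗ[K] K} (hB : B.SeparatingLeft)
    (S : Submodule K V) : (S.orthogonalBilin B).orthogonalBilin B.flip = S := by
  have flip_surjective : Function.Surjective B.flip :=
    flip_surjective_iff₁.mpr (ker_eq_bot.mp (separatingLeft_iff_ker_eq_bot.mp hB))
  calc (S.orthogonalBilin B).orthogonalBilin B.flip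
      = ((S.dualAnnihilator.comap B.flip).map B.flip).dualCoannihilator := by
        ext v
        simp [mem_dualCoannihilator]
    _ = S.dualAnnihilator.dualCoannihilator := by
        rw [map_comap_eq_of_surjective flip_surjective]
    _ = S := Subspace.dualAnnihilator_dualCoannihilator_eq

variable [FiniteDimensional K V₁] {B : V →ₗ[K] V →ₗ[K] K} {B₁ : V₁ →ₗ[K] V₁ →ₗ[K] K}
  {f : V →ₗ[K] V₁} {g : V₁ →ₗ[K] V}

lemma map_orthogonalBilin_eq_orthogonalBilin_comap
    (hB : B.SeparatingRight) (hB₁ : B₁.SeparatingLeft)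
    (h : B.IsAdjointPair B₁ f g) (F : Submodule K V₁) :
    (F.orthogonalBilin B₁).map g = (F.comap f).orthogonalBilin B :=
  calc (F.orthogonalBilin B₁).map g
      = (((F.orthogonalBilin B₁).map g).orthogonalBilin B.flip).orthogonalBilin B :=
        (orthogonalBilin_orthogonalBilin_flip (flip_separatingLeft.mpr hB) _).symm
    _ = (F.comap f).orthogonalBilin B := by
        rw [orthogonalBilin_flip_map h, orthogonalBilin_orthogonalBilin_flip hB₁]

theorem stmt7_general (hB : B.SeparatingRight) (hB₁ : B₁.SeparatingLeft)
    (h : B.IsAdjointPair B₁ f g) (F : Submodule K V₁) (C : range f →ₗ[K] range g →ₗ[K] K)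
    (hC : ∀ (z : V₁) (w : range f), C w ⟨g z, mem_range_self g z⟩ = B₁ w z) :
    ((F.orthogonalBilin B₁).map g : Set V) =
      {u | ∃ hu : u ∈ range g, ∀ (w : V₁) (hw : w ∈ range f), w ∈ F → C ⟨w, hw⟩ ⟨u, hu⟩ = 0} := by
  ext u
  constructor
  · rintro ⟨z, hz, rfl⟩
    exact ⟨mem_range_self g z, fun w hw hwF => (hC z ⟨w, hw⟩).trans (hz w hwF)⟩
  · rintro ⟨⟨z, rfl⟩, hz⟩
    rw [SetLike.mem_coe, map_orthogonalBilin_eq_orthogonalBilin_comap hB hB₁ h]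
    intro v hv
    calc B v (g z) = B₁ (f v) z := (h v z).symm
      _ = C ⟨f v, mem_range_self f v⟩ ⟨g z, mem_range_self g z⟩ := (hC z ⟨f v, _⟩).symm
      _ = 0 := hz (f v) _ hv

end FiniteDimensional

/-- for a self-adjoint nilpotent x and any subspace F,
x^j(F^⊥) = (F ∩ Im(x^j))^{⊥⊥_j}, the perpendicular taken inside Im(x^j) with respect to
the form ⟨⟨ , ⟩⟩_j (any bilinear form on Im(x^j) satisfying the defining property
⟨⟨x^j z, w⟩⟩_j = ⟨z, w⟩). -/
theorem stmt7 (V : Type*) [AddCommGroup V] [Module ℂ V] [FiniteDimensional ℂ V]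
    (n : ℕ) (hdim : finrank ℂ V = 2 * n)
    (B : V →ₗ[ℂ] V →ₗ[ℂ] ℂ) (hskew : ∀ v w : V, B w v = - B v w)
    (hnondeg : ∀ v : V, (∀ w : V, B v w = 0) → v = 0)
    (x : V →ₗ[ℂ] V) (hsa : ∀ v w : V, B (x v) w = B v (x w)) (hnil : IsNilpotent x)
    (F : Submodule ℂ V) (j : ℕ)
    (Bj : ↥(LinearMap.range (x ^ j)) →ₗ[ℂ] ↥(LinearMap.range (x ^ j)) →ₗ[ℂ] ℂ)
    (hBj : ∀ (z : V) (w : ↥(LinearMap.range (x ^ j))),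
      Bj ⟨(x ^ j) z, LinearMap.mem_range_self (x ^ j) z⟩ w = B z w) :
    ((perp B F).map (x ^ j) : Set V) =
      {u : V | ∃ hu : u ∈ LinearMap.range (x ^ j),
        ∀ (w : V) (hw : w ∈ LinearMap.range (x ^ j)), w ∈ F → Bj ⟨u, hu⟩ ⟨w, hw⟩ = 0} := by
  have hB : B.flip.Nondegenerate := flip_nondegenerate.mpr (nondegenerate_of_skew hskew hnondeg)
  -- `perp` pairs on the left and `orthogonalBilin` on the right, hence the flips.
  exact stmt7_general hB.2 hB.1 (isAdjointPair_pow (fun v w => (hsa w v).symm) j) F Bj.flip hBj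
end

section
/- Let V be a symplectic vector space, x a self-adjoint nilpotent endomorphism with x² = 0, F ⊆ ker(x) a subspace, and v ∈ Im(x) with v ∉ F. Then F ∩ x(F^⊥) = (F + ℂv) ∩ x(F^⊥) if and only if F ∩ x(F^⊥) is not contained in (ℂv)^{⊥⊥}, where ⊥⊥ is the perpendicular in Im(x) with respect to the form ⟨⟨ , ⟩⟩₁. -/
open Module Submodule LinearMap

/-!
Since `v ∉ F`, the modular law shows that adjoining `v` to `F` enlarges `F ⊓ x(F^⊥)` exactly when
`v ∈ F ⊔ x(F^⊥)`. As `x` is self-adjoint, the perpendicular of `F ⊔ x(F^⊥)` is `F^⊥ ⊓ x⁻¹(F)`, so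
this membership says that `v` is perpendicular to `F^⊥ ⊓ x⁻¹(F)`. Under `x` that subspace maps onto
`F ⊓ x(F^⊥)`, and the form on `Im(x)` turns perpendicularity to `w` into perpendicularity to `x w`.
-/

theorem inf_eq_inf_iff_not_le_sup_of_covBy {α : Type*} [Lattice α] [IsModularLattice α]
    {a b c : α} (hab : a ⋖ b) : a ⊓ c = b ⊓ c ↔ ¬b ≤ a ⊔ c := by
  constructor
  · intro h_inf h_le
    exact hab.ne (eq_of_le_of_inf_le_of_le_sup hab.le (h_inf.ge.trans inf_le_left) h_le)
  · intro h_not_le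
    have h_eq : (a ⊔ c) ⊓ b = a :=
      (hab.eq_or_eq (le_inf le_sup_left hab.le) inf_le_right).resolve_right
        fun h => h_not_le (inf_eq_right.mp h)
    have h_le : b ⊓ c ≤ a := calc
      b ⊓ c ≤ (a ⊔ c) ⊓ b := le_inf (inf_le_right.trans le_sup_right) inf_le_left
      _ = a := h_eq
    exact le_antisymm (inf_le_inf_right c hab.le) (le_inf h_le inf_le_right)

theorem inf_eq_sup_span_singleton_inf_iff_notMem_sup {K V : Type*} [DivisionRing K]
    [AddCommGroup V] [Module K V] {F G : Submodule K V} {v : V} (hv : v ∉ F) :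
    F ⊓ G = (F ⊔ span K {v}) ⊓ G ↔ v ∉ F ⊔ G := by
  have h_cov : F ⋖ F ⊔ span K {v} := sup_comm F (span K {v}) ▸ covBy_span_singleton_sup hv
  rw [inf_eq_inf_iff_not_le_sup_of_covBy h_cov, sup_le_iff, span_singleton_le_iff_mem,
    and_iff_right le_sup_left]

section Orthogonal

variable {R M M' : Type*} [CommSemiring R] [AddCommMonoid M] [Module R M]
  [AddCommMonoid M'] [Module R M']

theorem orthogonal_sup (B : LinearMap.BilinForm R M) (N L : Submodule R M) :
    B.orthogonal (N ⊔ L) = B.orthogonal N ⊓ B.orthogonal L := by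
  refine le_antisymm (le_inf (LinearMap.BilinForm.orthogonal_le le_sup_left)
    (LinearMap.BilinForm.orthogonal_le le_sup_right)) ?_
  rintro m ⟨hN, hL⟩ _ h
  obtain ⟨n, hn, l, hl, rfl⟩ := mem_sup.mp h
  rw [map_add, LinearMap.add_apply, hN n hn, hL l hl, add_zero]

theorem orthogonal_map_of_isAdjointPair {B : LinearMap.BilinForm R M}
    {B' : LinearMap.BilinForm R M'} {f : M →ₗ[R] M'} {g : M' →ₗ[R] M}
    (h : IsAdjointPair B B' f g) (N : Submodule R M) :
    B'.orthogonal (N.map f) = (B.orthogonal N).comap g := by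
  ext m
  simp only [LinearMap.BilinForm.mem_orthogonal_iff, mem_comap, mem_map, forall_exists_index,
    and_imp, forall_apply_eq_imp_iff₂, h _ m]

theorem map_subset_setOf_range_form_eq_zero_iff {f : M →ₗ[R] M'} {B : M →ₗ[R] M' →ₗ[R] R}
    {B₁ : range f →ₗ[R] range f →ₗ[R] R}
    (hB₁ : ∀ (z : M) (w : range f), B₁ ⟨f z, mem_range_self f z⟩ w = B z w)
    {v : M'} (hv : v ∈ range f) (N : Submodule R M) :
    (N.map f : Set M') ⊆ {u | ∃ hu : u ∈ range f, B₁ ⟨u, hu⟩ ⟨v, hv⟩ = 0} ↔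
      v ∈ N.orthogonalBilin B := by
  constructor
  · intro h n hn
    obtain ⟨_, h_zero⟩ := h (mem_map_of_mem hn)
    rwa [hB₁] at h_zero
  · rintro h _ ⟨n, hn, rfl⟩
    exact ⟨mem_range_self f n, (hB₁ n ⟨v, hv⟩).trans (h n hn)⟩

end Orthogonal

section SelfAdjoint

variable {K V : Type*} [Field K] [AddCommGroup V] [Module K V] [FiniteDimensional K V]
  {B : LinearMap.BilinForm K V} {x : V →ₗ[K] V}

theorem orthogonal_inf_comap_eq_sup_map_orthogonal (hrefl : B.IsRefl) (hnondeg : B.Nondegenerate)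
    (hsa : B.IsSelfAdjoint x) (F : Submodule K V) :
    B.orthogonal (B.orthogonal F ⊓ F.comap x) = F ⊔ (B.orthogonal F).map x := by
  have h_orth : B.orthogonal (F ⊔ (B.orthogonal F).map x) = B.orthogonal F ⊓ F.comap x := by
    rw [orthogonal_sup, orthogonal_map_of_isAdjointPair hsa,
      LinearMap.BilinForm.orthogonal_orthogonal hnondeg hrefl]
  rw [← h_orth, LinearMap.BilinForm.orthogonal_orthogonal hnondeg hrefl]

theorem stmt8_general (hrefl : B.IsRefl) (hnondeg : B.Nondegenerate) (hsa : B.IsSelfAdjoint x)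
    {F : Submodule K V} {v : V} (hv : v ∈ range x) (hvF : v ∉ F)
    {B₁ : range x →ₗ[K] range x →ₗ[K] K}
    (hB₁ : ∀ (z : V) (w : range x), B₁ ⟨x z, mem_range_self x z⟩ w = B z w) :
    F ⊓ (B.orthogonal F).map x = (F ⊔ span K {v}) ⊓ (B.orthogonal F).map x ↔
      ¬((F ⊓ (B.orthogonal F).map x : Submodule K V) : Set V) ⊆
        {u | ∃ hu : u ∈ range x, B₁ ⟨u, hu⟩ ⟨v, hv⟩ = 0} := by
  have h_image : F ⊓ (B.orthogonal F).map x = (B.orthogonal F ⊓ F.comap x).map x := by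
    rw [inf_comm, map_inf_eq_map_inf_comap]
  rw [inf_eq_sup_span_singleton_inf_iff_notMem_sup hvF,
    ← orthogonal_inf_comap_eq_sup_map_orthogonal hrefl hnondeg hsa, h_image]
  exact not_congr (map_subset_setOf_range_form_eq_zero_iff hB₁ hv _).symm

end SelfAdjoint

theorem perp_eq_orthogonal {V : Type*} [AddCommGroup V] [Module ℂ V] {B : LinearMap.BilinForm ℂ V}
    (hrefl : B.IsRefl) (W : Submodule ℂ V) : perp B W = B.orthogonal W := by
  ext v
  simp only [mem_perp, LinearMap.BilinForm.mem_orthogonal_iff, hrefl.eq_iff]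

/-- for self-adjoint x with x² = 0, F ⊆ ker x, v ∈ Im(x), v ∉ F:
F ∩ x(F^⊥) = (F + ℂv) ∩ x(F^⊥) if and only if F ∩ x(F^⊥) ⊄ (ℂv)^{⊥⊥}, where ⊥⊥ is the
perpendicular in Im(x) with respect to the form ⟨⟨ , ⟩⟩ (any bilinear form B1 on Im(x)
with ⟨⟨x z, w⟩⟩ = ⟨z, w⟩). -/
theorem stmt8 (V : Type*) [AddCommGroup V] [Module ℂ V] [FiniteDimensional ℂ V]
    (n : ℕ) (hdim : finrank ℂ V = 2 * n)
    (B : V →ₗ[ℂ] V →ₗ[ℂ] ℂ) (hskew : ∀ v w : V, B w v = - B v w)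
    (hnondeg : ∀ v : V, (∀ w : V, B v w = 0) → v = 0)
    (x : V →ₗ[ℂ] V) (hsa : ∀ v w : V, B (x v) w = B v (x w)) (hx2 : x ∘ₗ x = 0)
    (F : Submodule ℂ V) (hF : F ≤ LinearMap.ker x)
    (v : V) (hv : v ∈ LinearMap.range x) (hvF : v ∉ F)
    (B1 : ↥(LinearMap.range x) →ₗ[ℂ] ↥(LinearMap.range x) →ₗ[ℂ] ℂ)
    (hB1 : ∀ (z : V) (w : ↥(LinearMap.range x)),
      B1 ⟨x z, LinearMap.mem_range_self x z⟩ w = B z w) :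
    F ⊓ (perp B F).map x = (F ⊔ Submodule.span ℂ {v}) ⊓ (perp B F).map x ↔
      ¬ ((F ⊓ (perp B F).map x : Submodule ℂ V) : Set V) ⊆
          {u : V | ∃ hu : u ∈ LinearMap.range x, B1 ⟨u, hu⟩ ⟨v, hv⟩ = 0} := by
  have hrefl : B.IsRefl := fun a b hab => by rw [hskew a b, hab, neg_zero]
  rw [perp_eq_orthogonal hrefl]
  exact stmt8_general hrefl (hrefl.nondegenerate_iff_separatingLeft.mpr hnondeg) hsa hv hvF hB1
end
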